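/- arXiv:1606.03159 — 5 statements merged into one kernel-verified Lean document; each statement's English description precedes it below -/
import Mathlib

section
/- Let p(z) = \sum_{i=0}^n a_i z^i be a polynomial over \mathbb{C} of degree n with a_n \neq 0 and a_0 \neq 0. Then the multiset of complex roots of p (counted with multiplicity) is invariant under the inversion map z \mapsto 1/\overline{z} if and only if a_0 \cdot \overline{a_j} = \overline{a_n} \cdot a_{n-j} for all 0 \le j \le n. -/
open Polynomial

/-!
Let `σ` be conjugation; any field endomorphism would do. The roots of `p* = zⁿ σ(p)(1/z)`, which is
`(p.map σ).reverse`, are the points `1 / σ(z)` with `z` a root of `p`. Two split polynomials have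
the same roots exactly when they are proportional, and the factor can be read off any nonzero
coefficient. Reading it off the constant coefficients `a₀` of `p` and `σ(aₙ)` of `p*`, invariance
of the roots becomes `a₀ p* = σ(aₙ) p`, whose coefficient of degree `n - j` is the `j`-th relation.
-/

section Reverse

variable {K L : Type*} [Field K] [Field L]

lemma reverse_X_add_C {R : Type*} [Semiring R] (a : R) : (X + C a).reverse = C a * X + 1 := by
  nontriviality R
  have reverse_X : (X : R[X]).reverse = 1 := by
    rw [← one_mul X, reverse_mul_X, ← C_1, reverse_C]
  rw [reverse_add_C, reverse_X, natDegree_X, pow_one, add_comm]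

lemma roots_reverse_X_sub_C {a : K} (ha : a ≠ 0) : (X - C a).reverse.roots = {a⁻¹} := by
  rw [sub_eq_add_neg, ← C_neg, reverse_X_add_C, ← C_1, roots_C_mul_X_add_C _ (neg_ne_zero.mpr ha),
    inv_neg, mul_one, neg_neg]

lemma isRoot_reverse_iff {p : K[X]} {a : K} (ha : a ≠ 0) : p.reverse.IsRoot a ↔ p.IsRoot a⁻¹ := by
  let := invertibleOfNonzero (inv_ne_zero ha)
  simpa only [IsRoot.def, eval, invOf_eq_inv, inv_inv] using
    eval₂_reverse_eq_zero_iff (RingHom.id K) a⁻¹ p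

lemma roots_reverse_eq_zero {p : K[X]} (hp : p.roots = 0) : p.reverse.roots = 0 := by
  rcases eq_or_ne p 0 with rfl | hp0
  · exact roots_zero
  refine Multiset.eq_zero_of_forall_notMem fun a ha => ?_
  have hroot : p.reverse.IsRoot a := isRoot_of_mem_roots ha
  have ha0 : a ≠ 0 := by
    rintro rfl
    rw [IsRoot, ← coeff_zero_eq_eval_zero, coeff_zero_reverse, leadingCoeff_eq_zero] at hroot
    exact hp0 hroot
  have hinv : a⁻¹ ∈ p.roots := (mem_roots hp0).mpr ((isRoot_reverse_iff ha0).mp hroot)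
  exact Multiset.notMem_zero _ (hp ▸ hinv)

lemma roots_reverse {p : K[X]} (h0 : p.coeff 0 ≠ 0) : p.reverse.roots = p.roots.map (·⁻¹) := by
  induction hs : p.roots using Multiset.induction generalizing p with
  | empty => rw [roots_reverse_eq_zero hs, Multiset.map_zero]
  | cons a s ih =>
    obtain ⟨q, rfl⟩ : X - C a ∣ p :=
      dvd_iff_isRoot.mpr (isRoot_of_mem_roots (hs ▸ Multiset.mem_cons_self a s))
    have hp : (X - C a) * q ≠ 0 := fun h => h0 (by rw [h, coeff_zero])
    have hq : q.roots = s := by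
      rwa [roots_mul hp, roots_X_sub_C, Multiset.singleton_add, Multiset.cons_inj_right] at hs
    have hrev : ((X - C a) * q).reverse ≠ 0 := mt reverse_eq_zero.mp hp
    rw [mul_coeff_zero] at h0
    have ha : a ≠ 0 := by simpa using left_ne_zero_of_mul h0
    rw [reverse_mul_of_domain] at hrev ⊢
    rw [roots_mul hrev, roots_reverse_X_sub_C ha, ih (right_ne_zero_of_mul h0) hq,
      Multiset.singleton_add, Multiset.map_cons]

lemma splits_reverse {p : K[X]} (hp : p.Splits) : p.reverse.Splits := by
  induction hp using Submonoid.closure_induction with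
  | mem f hf =>
    rcases hf with ⟨a, rfl⟩ | ⟨a, rfl⟩
    · simpa only [reverse_C] using Splits.C a
    · exact .of_natDegree_le_one ((reverse_natDegree_le _).trans (natDegree_X_add_C a).le)
  | one => simpa only [← C_1, reverse_C] using Splits.C (1 : K)
  | mul f g _ _ hf hg => simpa only [reverse_mul_of_domain] using hf.mul hg

lemma roots_reverse_map {p : K[X]} (hp : p.Splits) (h0 : p.coeff 0 ≠ 0) (σ : K →+* L) :
    (p.map σ).reverse.roots = p.roots.map fun z => (σ z)⁻¹ := by
  have h0' : (p.map σ).coeff 0 ≠ 0 := by rwa [coeff_map, _root_.map_ne_zero]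
  rw [roots_reverse h0', hp.roots_map, Multiset.map_map]
  rfl

end Reverse

lemma roots_eq_roots_iff_C_coeff_mul_eq {R : Type*} [CommRing R] [IsDomain R] {p q : R[X]}
    (hp : p.Splits) (hq : q.Splits) {k : ℕ} (hpk : p.coeff k ≠ 0) (hqk : q.coeff k ≠ 0) :
    p.roots = q.roots ↔ C (q.coeff k) * p = C (p.coeff k) * q := by
  constructor <;> intro h
  · obtain ⟨f, a, b, rfl, rfl⟩ : ∃ f a b, p = C a * f ∧ q = C b * f :=
      ⟨_, _, _, hp.eq_prod_roots, h ▸ hq.eq_prod_roots⟩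
    simp only [coeff_C_mul, C_mul]
    ring
  · rw [← roots_C_mul p hqk, h, roots_C_mul q hpk]

lemma C_mul_reverse_eq_C_mul_iff {R : Type*} [Semiring R] {p q : R[X]}
    (hqp : q.natDegree ≤ p.natDegree) (a b : R) :
    C a * p.reverse = C b * q ↔
      ∀ j ≤ p.natDegree, a * p.coeff j = b * q.coeff (p.natDegree - j) := by
  simp only [Polynomial.ext_iff, coeff_C_mul, coeff_reverse]
  constructor
  · intro h j hj
    simpa only [revAt_le (Nat.sub_le _ j), Nat.sub_sub_self hj] using h (p.natDegree - j)
  · intro h j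
    rcases le_or_gt j p.natDegree with hj | hj
    · simpa only [revAt_le hj, Nat.sub_sub_self hj] using h (p.natDegree - j) (Nat.sub_le _ _)
    · rw [revAt_eq_self_of_lt hj, coeff_eq_zero_of_natDegree_lt hj,
        coeff_eq_zero_of_natDegree_lt (hqp.trans_lt hj), mul_zero, mul_zero]

theorem stmt_0_general {K : Type*} [Field K] (σ : K →+* K) {p : K[X]} (hp : p.Splits)
    (h0 : p.coeff 0 ≠ 0) :
    p.roots.map (fun z => (σ z)⁻¹) = p.roots ↔
      ∀ j ≤ p.natDegree, p.coeff 0 * σ (p.coeff j) =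
        σ p.leadingCoeff * p.coeff (p.natDegree - j) := by
  have hcoeff : (p.map σ).reverse.coeff 0 = σ p.leadingCoeff := by
    rw [coeff_zero_reverse, leadingCoeff_map]
  have hcoeff_ne : (p.map σ).reverse.coeff 0 ≠ 0 := by
    rw [hcoeff, _root_.map_ne_zero, leadingCoeff_ne_zero]
    exact fun hp0 => h0 (by rw [hp0, coeff_zero])
  have hdeg : (p.map σ).natDegree = p.natDegree := natDegree_map σ
  calc p.roots.map (fun z => (σ z)⁻¹) = p.roots
      ↔ (p.map σ).reverse.roots = p.roots := by rw [roots_reverse_map hp h0 σ]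
    _ ↔ C (p.coeff 0) * (p.map σ).reverse = C (σ p.leadingCoeff) * p := by
      rw [roots_eq_roots_iff_C_coeff_mul_eq (splits_reverse (hp.map σ)) hp hcoeff_ne h0, hcoeff]
    _ ↔ _ := by
      simp only [C_mul_reverse_eq_C_mul_iff hdeg.ge, hdeg, coeff_map]

/-- A degree-`n` polynomial over `ℂ` with nonzero constant and leading coefficients has its
multiset of roots invariant under the inversion `z ↦ 1/conj z` iff
`a₀ * conj aⱼ = conj aₙ * a_{n-j}` for all `0 ≤ j ≤ n`. -/
theorem stmt_0 (n : ℕ) (p : Polynomial ℂ) (hdeg : p.natDegree = n)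
    (han : p.coeff n ≠ 0) (ha0 : p.coeff 0 ≠ 0) :
    p.roots.map (fun z => ((starRingEnd ℂ) z)⁻¹) = p.roots ↔
      ∀ j ≤ n, p.coeff 0 * (starRingEnd ℂ) (p.coeff j) =
        (starRingEnd ℂ) (p.coeff n) * p.coeff (n - j) := by
  subst hdeg
  exact stmt_0_general (starRingEnd ℂ) (IsAlgClosed.splits p) ha0
end

section
/- Let p(z) = \sum_{k=0}^n a_k z^k be a self-inversive polynomial over \mathbb{C} of degree n, and let \lambda be a natural number with \lambda < n/2. If |a_{n-\lambda}| > \tfrac{1}{2} \binom{n}{n - 2\lambda} \sum_{k=0,\, k \neq \lambda,\, k \neq n-\lambda}^{n} |a_k|, then p has exactly n - 2\lambda roots (counted with multiplicity) on the unit circle |z| = 1. -/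
open Polynomial

/-!
After multiplication by a unimodular constant, `p (exp (2it)) * exp (-int)` is a real trigonometric
sum, equal to `A * (cos (mt + α) + g t)` with `m = n - 2λ` and `A = 2 * |a_{n-λ}|`. A
Bernstein–Szegő estimate for the remaining terms turns the coefficient bound into
`(m * g)² + g'² < m²`. Under this inequality `mt - arcsin (± g t)` is strictly increasing, and on
each interval where `mt + α` runs over `[jπ, (j + 1)π)` the zeros of `cos (mt + α) + g t` are the
points where it takes one prescribed value. So there is exactly one zero per interval; it is simple,
because a double zero would force `(m * g)² + g'² = m²`. One turn around the circle covers `m` such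
intervals.
-/

namespace SelfInversive

open Finset
open scoped Real ComplexConjugate

section PerturbedCosine

variable {g g' : ℝ → ℝ} {ω : ℝ}

lemma abs_lt_one_of_sq_add_sq_lt {x y : ℝ} (h : (ω * x) ^ 2 + y ^ 2 < ω ^ 2) : |x| < 1 := by
  rw [← sq_lt_one_iff_abs_lt_one]
  have hx : ω ^ 2 * x ^ 2 < ω ^ 2 * 1 := by nlinarith [sq_nonneg y]
  exact lt_of_mul_lt_mul_left hx (sq_nonneg ω)

lemma strictMono_mul_sub_arcsin (hω : 0 < ω) (hg : ∀ t, HasDerivAt g (g' t) t)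
    (hlt : ∀ t, (ω * g t) ^ 2 + g' t ^ 2 < ω ^ 2) :
    StrictMono fun t ↦ ω * t - Real.arcsin (g t) := by
  refine strictMono_of_hasDerivAt_pos (f' := fun t ↦ ω - 1 / √(1 - g t ^ 2) * g' t)
    (fun t ↦ ?_) fun t ↦ ?_
  all_goals have ⟨hgt, hgt'⟩ := abs_lt.1 (abs_lt_one_of_sq_add_sq_lt (hlt t))
  · exact (hasDerivAt_const_mul ω).sub ((Real.hasDerivAt_arcsin hgt.ne' hgt'.ne).comp t (hg t))
  · have hpos : 0 < 1 - g t ^ 2 := by nlinarith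
    have hslope : g' t < ω * √(1 - g t ^ 2) := by
      refine lt_of_pow_lt_pow_left₀ 2 (by positivity) ?_
      rw [mul_pow, Real.sq_sqrt hpos.le]
      linarith [hlt t, mul_pow ω (g t) 2]
    rw [sub_pos, one_div_mul_eq_div, div_lt_iff₀ (Real.sqrt_pos.2 hpos)]
    exact hslope

lemma existsUnique_mul_sub_arcsin_eq (hω : 0 < ω) (hg : ∀ t, HasDerivAt g (g' t) t)
    (hlt : ∀ t, (ω * g t) ^ 2 + g' t ^ 2 < ω ^ 2) (c : ℝ) :
    ∃! t, ω * t - Real.arcsin (g t) = c := by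
  have hcont : Continuous fun t ↦ ω * t - Real.arcsin (g t) :=
    (continuous_const_mul ω).sub (Real.continuous_arcsin.comp
      (continuous_iff_continuousAt.2 fun t ↦ (hg t).continuousAt))
  have hle : (c - π / 2) / ω ≤ (c + π / 2) / ω := by
    gcongr
    linarith [Real.pi_pos]
  obtain ⟨t, -, ht⟩ := intermediate_value_Icc hle hcont.continuousOn (show c ∈ _ by
    simp only [Set.mem_Icc, mul_div_cancel₀ _ hω.ne']
    constructor
    · linarith [Real.neg_pi_div_two_le_arcsin (g ((c - π / 2) / ω))]
    · linarith [Real.arcsin_le_pi_div_two (g ((c + π / 2) / ω))])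
  exact ⟨t, ht, fun s hs ↦ (strictMono_mul_sub_arcsin hω hg hlt).injective (hs.trans ht.symm)⟩

lemma mem_Ico_and_cos_add_eq_zero_iff {x y : ℝ} {j : ℕ} (hy : |y| < 1) :
    (x ∈ Set.Ico (j * π) ((j + 1) * π) ∧ Real.cos x + y = 0) ↔
      x - Real.arcsin ((-1) ^ j * y) = (j + 1 / 2) * π := by
  have hsin : Real.sin (x - (j + 1 / 2) * π) = -((-1) ^ j * Real.cos x) := by
    rw [show x - (j + 1 / 2) * π = x - π / 2 - j * π by ring, Real.sin_sub_nat_mul_pi,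
      Real.sin_sub_pi_div_two, mul_neg]
  have hsign : ((-1 : ℝ) ^ j) * (-1) ^ j = 1 := by rw [← mul_pow]; norm_num
  have hy' : |(-1) ^ j * y| < 1 := by simpa [abs_mul] using hy
  constructor
  · rintro ⟨⟨hlo, hhi⟩, hcos⟩
    have hval : Real.sin (x - (j + 1 / 2) * π) = (-1) ^ j * y := by
      rw [hsin]
      linear_combination -(-1) ^ j * hcos
    rw [Real.arcsin_eq_of_sin_eq hval ⟨by linarith, by linarith⟩]
    ring
  · intro h
    have hx : x - (j + 1 / 2) * π = Real.arcsin ((-1) ^ j * y) := by linarith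
    have hlo := Real.neg_pi_div_two_lt_arcsin.2 (abs_lt.1 hy').1
    have hhi := Real.arcsin_lt_pi_div_two.2 (abs_lt.1 hy').2
    refine ⟨⟨by linarith, by linarith⟩, ?_⟩
    rw [hx, Real.sin_arcsin (abs_lt.1 hy').1.le (abs_lt.1 hy').2.le] at hsin
    linear_combination (-1) ^ j * hsin - (Real.cos x + y) * hsign

lemma existsUnique_cos_add_eq_zero (hω : 0 < ω) (hg : ∀ t, HasDerivAt g (g' t) t)
    (hlt : ∀ t, (ω * g t) ^ 2 + g' t ^ 2 < ω ^ 2) (α : ℝ) (j : ℕ) :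
    ∃! t, ω * t + α ∈ Set.Ico (j * π) ((j + 1) * π) ∧ Real.cos (ω * t + α) + g t = 0 := by
  have hsign : ((-1 : ℝ) ^ j) ^ 2 = 1 := by rw [← pow_mul', pow_mul]; simp
  obtain ⟨t, ht, huniq⟩ := existsUnique_mul_sub_arcsin_eq hω
    (fun t ↦ (hg t).const_mul ((-1) ^ j))
    (fun t ↦ by simpa only [mul_left_comm ω, mul_pow, hsign, one_mul] using hlt t)
    ((j + 1 / 2) * π - α)
  have hiff (t : ℝ) := mem_Ico_and_cos_add_eq_zero_iff (x := ω * t + α) (j := j)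
    (abs_lt_one_of_sq_add_sq_lt (hlt t))
  exact ⟨t, (hiff t).2 (by linarith), fun s hs ↦ huniq s (by linarith [(hiff s).1 hs])⟩

lemma ncard_cos_add_eq_zero (hω : 0 < ω) (hg : ∀ t, HasDerivAt g (g' t) t)
    (hlt : ∀ t, (ω * g t) ^ 2 + g' t ^ 2 < ω ^ 2) (α : ℝ) (m : ℕ) :
    {t | ω * t + α ∈ Set.Ico 0 (m * π) ∧ Real.cos (ω * t + α) + g t = 0}.ncard = m := by
  have hfloor {x : ℝ} {j : ℕ} (hx : 0 ≤ x) :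
      ⌊x / π⌋₊ = j ↔ x ∈ Set.Ico (j * π) ((j + 1) * π) := by
    rw [Nat.floor_eq_iff (by positivity), le_div_iff₀ Real.pi_pos, div_lt_iff₀ Real.pi_pos,
      Set.mem_Ico]
  have hzero := existsUnique_cos_add_eq_zero hω hg hlt α
  have hbij : Set.BijOn (fun t ↦ ⌊(ω * t + α) / π⌋₊)
      {t | ω * t + α ∈ Set.Ico 0 (m * π) ∧ Real.cos (ω * t + α) + g t = 0} (Set.Iio m) := by
    refine ⟨fun t ht ↦ ?_, fun s hs t ht hst ↦ ?_, fun j hj ↦ ?_⟩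
    · have ⟨⟨h0, hm⟩, _⟩ := ht
      rwa [Set.mem_Iio, Nat.floor_lt (by positivity), div_lt_iff₀ Real.pi_pos]
    · exact (hzero _).unique ⟨(hfloor hs.1.1).1 hst, hs.2⟩ ⟨(hfloor ht.1.1).1 rfl, ht.2⟩
    · obtain ⟨t, ⟨ht, hcos⟩, -⟩ := hzero j
      have h0 : 0 ≤ ω * t + α := le_trans (by positivity) ht.1
      have hjm : (j + 1) * π ≤ m * π := by
        gcongr
        exact_mod_cast Set.mem_Iio.1 hj
      exact ⟨t, ⟨⟨h0, ht.2.trans_le hjm⟩, hcos⟩, (hfloor h0).2 ht⟩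
  rw [hbij.ncard_eq, Set.ncard_eq_toFinset_card', Set.toFinset_Iio, Nat.card_Iio]

lemma neg_sin_mul_add_ne_zero_of_cos_add_eq_zero {x y y' : ℝ} (hlt : (ω * y) ^ 2 + y' ^ 2 < ω ^ 2)
    (h : Real.cos x + y = 0) : -Real.sin x * ω + y' ≠ 0 := by
  intro h'
  rw [eq_neg_of_add_eq_zero_right h, eq_neg_of_add_eq_zero_right h'] at hlt
  nlinarith [Real.sin_sq_add_cos_sq x]

end PerturbedCosine

section UnitCircleRoots

lemma bijOn_exp_two_mul_ofReal_mul_I (a : ℝ) :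
    Set.BijOn (fun t : ℝ ↦ Complex.exp ((2 * t : ℝ) * Complex.I)) (Set.Ico a (a + π))
      {z | ‖z‖ = 1} := by
  have : Fact (0 < π) := ⟨Real.pi_pos⟩
  have hexp (t : ℝ) : (AddCircle.toCircle (t : AddCircle π) : ℂ) =
      Complex.exp ((2 * t : ℝ) * Complex.I) := by
    rw [AddCircle.toCircle_apply_mk, Circle.coe_exp, mul_div_cancel_right₀ _ Real.pi_ne_zero]
  refine ⟨fun t _ ↦ Complex.norm_exp_ofReal_mul_I _, fun s hs t ht hst ↦ ?_, fun z hz ↦ ?_⟩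
  · beta_reduce at hst
    rw [← hexp, ← hexp] at hst
    exact (AddCircle.coe_eq_coe_iff_of_mem_Ico hs ht).1
      (AddCircle.injective_toCircle Real.pi_ne_zero (Circle.ext hst))
  · obtain ⟨x, hx⟩ := (AddCircle.homeomorphCircle Real.pi_ne_zero).surjective
      ⟨z, mem_sphere_zero_iff_norm.2 hz⟩
    refine ⟨AddCircle.equivIco π a x, Subtype.coe_prop _, ?_⟩
    beta_reduce
    rw [← hexp, AddCircle.coe_equivIco, ← AddCircle.homeomorphCircle_apply Real.pi_ne_zero, hx]

lemma card_filter_roots_eq_ncard {R : Type*} [CommRing R] [IsDomain R] {q : R[X]} (hq : q ≠ 0)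
    {P : R → Prop} [DecidablePred P]
    (hsimple : ∀ z, P z → q.IsRoot z → ¬ q.derivative.IsRoot z) :
    (q.roots.filter P).card = {z | P z ∧ q.IsRoot z}.ncard := by
  classical
  have hnodup : (q.roots.filter P).Nodup := by
    refine Multiset.nodup_iff_count_le_one.2 fun z ↦ ?_
    by_contra! hcount
    obtain ⟨hroot, hP⟩ := Multiset.mem_filter.1 (Multiset.count_pos.1 (zero_lt_one.trans hcount))
    rw [Multiset.count_filter_of_pos hP, count_roots, one_lt_rootMultiplicity_iff_isRoot hq]
      at hcount
    exact hsimple z hP hcount.1 hcount.2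
  rw [← Multiset.toFinset_card_of_nodup hnodup, ← Set.ncard_coe_finset]
  congr 1
  ext z
  simp [hq, and_comm]

lemma not_isRoot_derivative_of_hasDerivAt {q : ℂ[X]} {v γ : ℝ → ℂ} {f' : ℂ} {t : ℝ}
    (hv : DifferentiableAt ℝ v t) (hγ : DifferentiableAt ℝ γ t)
    (hf : HasDerivAt (fun s ↦ v s * q.eval (γ s)) f' t) (hf' : f' ≠ 0)
    (hroot : q.IsRoot (γ t)) : ¬ q.derivative.IsRoot (γ t) := by
  intro hroot'
  have hprod := hv.hasDerivAt.mul ((q.hasDerivAt (γ t)).comp t hγ.hasDerivAt)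
  refine hf' ((hf.unique hprod).trans ?_)
  simp [hroot.eq_zero, hroot'.eq_zero]

end UnitCircleRoots

section TrigSum

/-- The trigonometric sum `∑ k ∈ T, b k * exp ((2 * k - n) * t * I)`. For `T = range (n + 1)` it is
`z ^ (-n / 2) * ∑ k, b k * z ^ k` at `z = exp (2 * t * I)`; using half the argument of `z` as the
variable keeps the frequencies integral when `n` is odd. -/
noncomputable def trigSum (n : ℕ) (T : Finset ℕ) (b : ℕ → ℂ) (t : ℝ) : ℂ :=
  ∑ k ∈ T, b k * Complex.exp (((2 * k - n) * t : ℝ) * Complex.I)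

/-- The coefficients of the derivative of `trigSum n T b`. -/
noncomputable def derivCoeff (n : ℕ) (b : ℕ → ℂ) (k : ℕ) : ℂ :=
  (2 * k - n) * Complex.I * b k

/-- Conjugate symmetry `b (n - k) = conj (b k)` of coefficients on a set `T` of indices that is
invariant under `k ↦ n - k`; this is self-inversivity with `w = 1`, restricted to `T`. -/
def IsConjSymmOn (n : ℕ) (T : Finset ℕ) (b : ℕ → ℂ) : Prop :=
  ∀ k ∈ T, k ≤ n ∧ n - k ∈ T ∧ b (n - k) = conj (b k)

variable {n : ℕ} {T : Finset ℕ} {b : ℕ → ℂ}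

lemma IsConjSymmOn.mono {U : Finset ℕ} (hb : IsConjSymmOn n T b) (hUT : U ⊆ T)
    (hU : ∀ k ∈ U, n - k ∈ U) : IsConjSymmOn n U b :=
  fun k hk ↦ ⟨(hb k (hUT hk)).1, hU k hk, (hb k (hUT hk)).2.2⟩

lemma IsConjSymmOn.sum_reflect {M : Type*} [AddCommMonoid M] (hb : IsConjSymmOn n T b)
    (f : ℕ → M) : ∑ k ∈ T, f (n - k) = ∑ k ∈ T, f k :=
  sum_nbij' (n - ·) (n - ·) (fun k hk ↦ (hb k hk).2.1) (fun k hk ↦ (hb k hk).2.1)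
    (fun k hk ↦ Nat.sub_sub_self (hb k hk).1) (fun k hk ↦ Nat.sub_sub_self (hb k hk).1)
    fun _ _ ↦ rfl

protected lemma IsConjSymmOn.derivCoeff (hb : IsConjSymmOn n T b) :
    IsConjSymmOn n T (derivCoeff n b) := by
  refine fun k hk ↦ ⟨(hb k hk).1, (hb k hk).2.1, ?_⟩
  simp only [derivCoeff, (hb k hk).2.2, Nat.cast_sub (hb k hk).1, map_mul, map_sub, map_natCast,
    map_ofNat, Complex.conj_I]
  ring

lemma IsConjSymmOn.ofReal_re_trigSum (hb : IsConjSymmOn n T b) (t : ℝ) :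
    ((trigSum n T b t).re : ℂ) = trigSum n T b t := by
  rw [← Complex.conj_eq_iff_re, trigSum, map_sum, ← hb.sum_reflect]
  refine sum_congr rfl fun k hk ↦ ?_
  rw [(hb k hk).2.2, map_mul, Complex.conj_conj, ← Complex.exp_conj, Nat.cast_sub (hb k hk).1,
    map_mul, Complex.conj_I, Complex.conj_ofReal]
  congr 2
  push_cast
  ring

lemma hasDerivAt_trigSum (n : ℕ) (T : Finset ℕ) (b : ℕ → ℂ) (t : ℝ) :
    HasDerivAt (trigSum n T b) (trigSum n T (derivCoeff n b) t) t := by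
  refine HasDerivAt.fun_sum fun k _ ↦ ?_
  have harg : HasDerivAt (fun t : ℝ ↦ (((2 * k - n) * t : ℝ) : ℂ) * Complex.I)
      ((2 * k - n : ℝ) * Complex.I) t :=
    (hasDerivAt_const_mul _).ofReal_comp.mul_const _
  convert! harg.cexp.const_mul (b k) using 1
  simp only [derivCoeff]
  push_cast
  ring

lemma hasDerivAt_re_trigSum (n : ℕ) (T : Finset ℕ) (b : ℕ → ℂ) (t : ℝ) :
    HasDerivAt (fun t ↦ (trigSum n T b t).re) (trigSum n T (derivCoeff n b) t).re t :=
  Complex.reCLM.hasFDerivAt.comp_hasDerivAt t (hasDerivAt_trigSum n T b t)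

lemma IsConjSymmOn.sum_two_mul_norm (hb : IsConjSymmOn n T b) :
    ∑ k ∈ T, 2 * k * ‖b k‖ = n * ∑ k ∈ T, ‖b k‖ := by
  have hreflect := hb.sum_reflect fun k ↦ (k : ℝ) * ‖b k‖
  calc ∑ k ∈ T, 2 * k * ‖b k‖
      = ∑ k ∈ T, ((n - k : ℕ) * ‖b (n - k)‖ + k * ‖b k‖) := by
        rw [sum_add_distrib, hreflect, ← sum_add_distrib]
        exact sum_congr rfl fun k _ ↦ by ring
    _ = n * ∑ k ∈ T, ‖b k‖ := by
        rw [mul_sum]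
        refine sum_congr rfl fun k hk ↦ ?_
        rw [(hb k hk).2.2, RCLike.norm_conj, Nat.cast_sub (hb k hk).1]
        ring

-- For the real sum `G`, the terms of `n * G - I * G'` are `2 * k * b k * exp (…)`, and the weights
-- `2 * k` average to `n` by symmetry.
lemma IsConjSymmOn.sq_mul_re_trigSum_add_sq_le (hb : IsConjSymmOn n T b) (t : ℝ) :
    (n * (trigSum n T b t).re) ^ 2 + (trigSum n T (derivCoeff n b) t).re ^ 2 ≤
      (n * ∑ k ∈ T, ‖b k‖) ^ 2 := by
  set G := trigSum n T b t
  set G' := trigSum n T (derivCoeff n b) t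
  have hsum : ((n * G.re : ℝ) : ℂ) + (-G'.re : ℝ) * Complex.I =
      ∑ k ∈ T, 2 * k * b k * Complex.exp (((2 * k - n) * t : ℝ) * Complex.I) := by
    rw [Complex.ofReal_mul, Complex.ofReal_neg, hb.ofReal_re_trigSum,
      hb.derivCoeff.ofReal_re_trigSum, Complex.ofReal_natCast, trigSum, trigSum, mul_sum,
      ← sum_neg_distrib, sum_mul, ← sum_add_distrib]
    refine sum_congr rfl fun k _ ↦ ?_
    rw [derivCoeff]
    linear_combination (-(2 * k - n) * b k *
      Complex.exp (((2 * k - n) * t : ℝ) * Complex.I)) * Complex.I_sq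
  have hnorm : ‖((n * G.re : ℝ) : ℂ) + (-G'.re : ℝ) * Complex.I‖ ≤ n * ∑ k ∈ T, ‖b k‖ := by
    rw [hsum, ← hb.sum_two_mul_norm]
    refine norm_sum_le_of_le T fun k _ ↦ ?_
    rw [norm_mul, Complex.norm_exp_ofReal_mul_I]
    simp
  calc (n * G.re) ^ 2 + G'.re ^ 2 = ‖((n * G.re : ℝ) : ℂ) + (-G'.re : ℝ) * Complex.I‖ ^ 2 := by
        rw [← Complex.normSq_eq_norm_sq, Complex.normSq_add_mul_I, neg_sq]
    _ ≤ (n * ∑ k ∈ T, ‖b k‖) ^ 2 := by gcongr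

lemma IsConjSymmOn.trigSum_pair {l : ℕ} (hl : 2 * l < n) (hb : IsConjSymmOn n {l, n - l} b)
    (t : ℝ) : trigSum n {l, n - l} b t =
      (2 * ‖b (n - l)‖ * Real.cos ((n - 2 * l : ℕ) * t + (b (n - l)).arg) : ℝ) := by
  have hconj : b l = conj (b (n - l)) := by
    rw [(hb l (by simp)).2.2, Complex.conj_conj]
  set c := b (n - l) with hc
  have hphase : c * Complex.exp (((2 * (n - l : ℕ) - n) * t : ℝ) * Complex.I) =
      ‖c‖ * Complex.exp (((n - 2 * l : ℕ) * t + c.arg : ℝ) * Complex.I) := by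
    nth_rw 1 [← Complex.norm_mul_exp_arg_mul_I c]
    rw [mul_assoc, ← Complex.exp_add, Nat.cast_sub (by lia), Nat.cast_sub hl.le]
    congr 2
    push_cast
    ring
  have hphase' : conj c * Complex.exp (((2 * l - n) * t : ℝ) * Complex.I) =
      conj (c * Complex.exp (((2 * (n - l : ℕ) - n) * t : ℝ) * Complex.I)) := by
    rw [map_mul, ← Complex.exp_conj, map_mul, Complex.conj_I, Complex.conj_ofReal,
      Nat.cast_sub (by lia)]
    congr 2
    push_cast
    ring
  rw [trigSum, sum_pair (by lia), hconj, ← hc, hphase', hphase, add_comm, Complex.add_conj,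
    Complex.re_ofReal_mul, Complex.exp_ofReal_mul_I_re, mul_assoc]

lemma trigSum_coeff {p : ℂ[X]} (hp : p.natDegree ≤ n) (t : ℝ) :
    trigSum n (range (n + 1)) p.coeff t = Complex.exp ((-(n * t) : ℝ) * Complex.I) *
      p.eval (Complex.exp ((2 * t : ℝ) * Complex.I)) := by
  rw [trigSum, eval_eq_sum_range' (Nat.lt_succ_of_le hp), mul_sum]
  refine sum_congr rfl fun k _ ↦ ?_
  rw [← Complex.exp_nat_mul, mul_left_comm, ← Complex.exp_add]
  congr 2
  push_cast
  ring

lemma card_unit_roots_eq_ncard_trigSum_eq_zero {p : ℂ[X]} (hp : p ≠ 0) (hpn : p.natDegree ≤ n)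
    (hsimple : ∀ t, trigSum n (range (n + 1)) p.coeff t = 0 →
      deriv (trigSum n (range (n + 1)) p.coeff) t ≠ 0) (a : ℝ) :
    (p.roots.filter fun z ↦ ‖z‖ = 1).card =
      {t ∈ Set.Ico a (a + π) | trigSum n (range (n + 1)) p.coeff t = 0}.ncard := by
  have hzero (t : ℝ) : trigSum n (range (n + 1)) p.coeff t = 0 ↔
      p.IsRoot (Complex.exp ((2 * t : ℝ) * Complex.I)) := by
    rw [trigSum_coeff hpn, mul_eq_zero, or_iff_right (Complex.exp_ne_zero _), IsRoot.def]
  have hbij := bijOn_exp_two_mul_ofReal_mul_I a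
  rw [card_filter_roots_eq_ncard hp]
  · refine (Set.BijOn.ncard_eq (f := fun t : ℝ ↦ Complex.exp ((2 * t : ℝ) * Complex.I))
      ⟨?_, ?_, ?_⟩).symm
    · exact fun t ht ↦ ⟨hbij.mapsTo ht.1, (hzero t).1 ht.2⟩
    · exact hbij.injOn.mono fun t ht ↦ ht.1
    · rintro z ⟨hz, hroot⟩
      obtain ⟨t, ht, rfl⟩ := hbij.surjOn hz
      exact ⟨t, ⟨ht, (hzero t).2 hroot⟩, rfl⟩
  · intro z hz hroot
    obtain ⟨t, -, rfl⟩ := hbij.surjOn hz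
    refine not_isRoot_derivative_of_hasDerivAt
      (v := fun t ↦ Complex.exp ((-(n * t) : ℝ) * Complex.I))
      (γ := fun t ↦ Complex.exp ((2 * t : ℝ) * Complex.I))
      (by fun_prop) (by fun_prop) ?_ (hsimple t ((hzero t).2 hroot)) hroot
    simpa only [← trigSum_coeff hpn] using
      (hasDerivAt_trigSum n _ p.coeff t).differentiableAt.hasDerivAt

end TrigSum

section Count

variable {n l : ℕ} {T : Finset ℕ} {b : ℕ → ℂ}

lemma IsConjSymmOn.sq_mul_div_add_sq_div_lt (hb : IsConjSymmOn n T b) {ω A : ℝ} (hω : 0 < ω)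
    (hωn : ω ≤ n) (hA : n * ∑ k ∈ T, ‖b k‖ < ω * A) (t : ℝ) :
    (ω * ((trigSum n T b t).re / A)) ^ 2 + ((trigSum n T (derivCoeff n b) t).re / A) ^ 2 <
      ω ^ 2 := by
  have hAω : 0 < ω * A := lt_of_le_of_lt (by positivity) hA
  have hApos : 0 < A := pos_of_mul_pos_right hAω hω.le
  rw [← mul_div_assoc, div_pow, div_pow, ← add_div, div_lt_iff₀ (by positivity), ← mul_pow]
  calc (ω * (trigSum n T b t).re) ^ 2 + (trigSum n T (derivCoeff n b) t).re ^ 2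
      ≤ (n * (trigSum n T b t).re) ^ 2 + (trigSum n T (derivCoeff n b) t).re ^ 2 := by
        rw [mul_pow, mul_pow]
        gcongr
    _ ≤ (n * ∑ k ∈ T, ‖b k‖) ^ 2 := hb.sq_mul_re_trigSum_add_sq_le t
    _ < (ω * A) ^ 2 := by gcongr

lemma IsConjSymmOn.pair (hb : IsConjSymmOn n T b) (hlT : l ∈ T) : IsConjSymmOn n {l, n - l} b :=
  hb.mono (insert_subset hlT (singleton_subset_iff.2 (hb l hlT).2.1)) fun k hk ↦ by
    have := (hb l hlT).1
    simp only [mem_insert, mem_singleton] at hk ⊢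
    lia

lemma IsConjSymmOn.sdiff_pair (hb : IsConjSymmOn n T b) (hln : l ≤ n) :
    IsConjSymmOn n (T \ {l, n - l}) b :=
  hb.mono sdiff_subset fun k hk ↦ by
    simp only [mem_sdiff, mem_insert, mem_singleton] at hk ⊢
    have := hb k hk.1
    exact ⟨this.2.1, by lia⟩

lemma IsConjSymmOn.trigSum_eq_mul_cos_add (hb : IsConjSymmOn n T b) (hl : 2 * l < n) (hlT : l ∈ T)
    (h0 : b (n - l) ≠ 0) (t : ℝ) :
    trigSum n T b t = (2 * ‖b (n - l)‖ * (Real.cos ((n - 2 * l : ℕ) * t + (b (n - l)).arg) +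
      (trigSum n (T \ {l, n - l}) b t).re / (2 * ‖b (n - l)‖)) : ℝ) := by
  have hsub : {l, n - l} ⊆ T := insert_subset hlT (singleton_subset_iff.2 (hb l hlT).2.1)
  have hsplit : trigSum n T b t = trigSum n (T \ {l, n - l}) b t + trigSum n {l, n - l} b t :=
    (sum_sdiff hsub).symm
  rw [hsplit, (hb.pair hlT).trigSum_pair hl, mul_add,
    mul_div_cancel₀ _ (mul_ne_zero two_ne_zero (norm_ne_zero_iff.2 h0)), Complex.ofReal_add,
    (hb.sdiff_pair (by lia)).ofReal_re_trigSum, add_comm]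

lemma card_unit_roots_of_trigSum_eq {p : ℂ[X]} (hp0 : p ≠ 0) (hpn : p.natDegree ≤ n) {m : ℕ}
    (hm : 0 < m) {A α : ℝ} (hA : A ≠ 0) {g g' : ℝ → ℝ} (hg : ∀ t, HasDerivAt g (g' t) t)
    (hlt : ∀ t, (m * g t) ^ 2 + g' t ^ 2 < m ^ 2)
    (htrig : ∀ t, trigSum n (range (n + 1)) p.coeff t =
      (A * (Real.cos (m * t + α) + g t) : ℝ)) :
    (p.roots.filter fun z ↦ ‖z‖ = 1).card = m := by
  have hm' : (0 : ℝ) < m := Nat.cast_pos.2 hm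
  have hzero (t : ℝ) : trigSum n (range (n + 1)) p.coeff t = 0 ↔
      Real.cos (m * t + α) + g t = 0 := by
    rw [htrig, Complex.ofReal_eq_zero, mul_eq_zero, or_iff_right hA]
  have hsimple (t : ℝ) (ht : trigSum n (range (n + 1)) p.coeff t = 0) :
      deriv (trigSum n (range (n + 1)) p.coeff) t ≠ 0 := by
    have hcos : HasDerivAt (fun t ↦ Real.cos (m * t + α)) (-Real.sin (m * t + α) * m) t :=
      ((hasDerivAt_const_mul (m : ℝ)).add_const α).cos
    have hderiv := ((hcos.fun_add (hg t)).const_mul A).ofReal_comp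
    rw [funext htrig, hderiv.deriv, Complex.ofReal_ne_zero]
    exact mul_ne_zero hA
      (neg_sin_mul_add_ne_zero_of_cos_add_eq_zero (hlt t) ((hzero t).1 ht))
  have hperiod (t : ℝ) :
      t ∈ Set.Ico (-α / m) (-α / m + π) ↔ m * t + α ∈ Set.Ico 0 (m * π) := by
    rw [Set.mem_Ico, Set.mem_Ico, ← sub_lt_iff_lt_add, div_le_iff₀ hm', lt_div_iff₀ hm']
    constructor <;> rintro ⟨hlo, hhi⟩ <;> constructor <;> linarith
  rw [card_unit_roots_eq_ncard_trigSum_eq_zero hp0 hpn hsimple (-α / m)]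
  simp only [hperiod, hzero]
  exact ncard_cos_add_eq_zero hm' hg hlt α m

lemma card_unit_roots_of_isConjSymmOn {p : ℂ[X]} (hpn : p.natDegree ≤ n) (hl : 2 * l < n)
    (hp : IsConjSymmOn n (range (n + 1)) p.coeff)
    (hbig : n * ∑ k ∈ range (n + 1) \ {l, n - l}, ‖p.coeff k‖ <
      (n - 2 * l : ℕ) * (2 * ‖p.coeff (n - l)‖)) :
    (p.roots.filter fun z ↦ ‖z‖ = 1).card = n - 2 * l := by
  have hm : 0 < n - 2 * l := Nat.sub_pos_of_lt hl
  have hA : 0 < 2 * ‖p.coeff (n - l)‖ :=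
    pos_of_mul_pos_right (lt_of_le_of_lt (by positivity) hbig) (Nat.cast_nonneg (n - 2 * l))
  have hcoeff : p.coeff (n - l) ≠ 0 := norm_pos_iff.1 (pos_of_mul_pos_right hA zero_le_two)
  exact card_unit_roots_of_trigSum_eq (by rintro rfl; simp at hcoeff) hpn hm hA.ne'
    (fun t ↦ (hasDerivAt_re_trigSum n (range (n + 1) \ {l, n - l}) p.coeff t).div_const _)
    ((hp.sdiff_pair (by lia)).sq_mul_div_add_sq_div_lt (Nat.cast_pos.2 hm)
      (Nat.cast_le.2 (Nat.sub_le _ _)) hbig)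
    (hp.trigSum_eq_mul_cos_add hl (mem_range.2 (by lia)) hcoeff)

lemma exists_isConjSymmOn_C_mul {p : ℂ[X]} {w : ℂ} (hw : ‖w‖ = 1)
    (hp : ∀ j ≤ n, p.coeff j = w * conj (p.coeff (n - j))) :
    ∃ u : ℂ, ‖u‖ = 1 ∧ IsConjSymmOn n (range (n + 1)) (C u * p).coeff := by
  obtain ⟨v, hv⟩ := IsSquare.exists_sq w (IsAlgClosed.exists_eq_mul_self w)
  have hvnorm : ‖v‖ = 1 :=
    (pow_eq_one_iff_of_nonneg (norm_nonneg v) two_ne_zero).1 (by rw [← norm_pow, ← hv, hw])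
  have hvv : v * conj v = 1 := by simp [Complex.mul_conj', hvnorm]
  refine ⟨conj v, by simpa using hvnorm, fun k hk ↦ ?_⟩
  have hkn : k ≤ n := mem_range_succ_iff.1 hk
  refine ⟨hkn, mem_range_succ_iff.2 (Nat.sub_le n k), ?_⟩
  rw [coeff_C_mul, coeff_C_mul, hp (n - k) (Nat.sub_le n k), Nat.sub_sub_self hkn, hv, map_mul,
    Complex.conj_conj]
  linear_combination v * conj (p.coeff k) * hvv

lemma div_two_mul_le_half_choose {n m : ℕ} (hm : 0 < m) (hmn : m ≤ n) :
    (n : ℝ) / (2 * m) ≤ 1 / 2 * n.choose m := by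
  have hmul : n ≤ n.choose m * m := by
    obtain ⟨n, rfl⟩ := Nat.exists_eq_add_one.2 (hm.trans_le hmn)
    obtain ⟨m, rfl⟩ := Nat.exists_eq_add_one.2 hm
    rw [← Nat.add_one_mul_choose_eq]
    exact Nat.le_mul_of_pos_right _ (Nat.choose_pos (by lia))
  rw [div_le_iff₀ (by positivity)]
  have : (n : ℝ) ≤ n.choose m * m := mod_cast hmul
  linarith

end Count

end SelfInversive

open SelfInversive in
theorem stmt_5_general (n lam : ℕ) (p : ℂ[X]) (hdeg : p.natDegree ≤ n) (hlam : 2 * lam < n)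
    (hsi : ∃ w : ℂ, ‖w‖ = 1 ∧
      ∀ j ≤ n, p.coeff j = w * (starRingEnd ℂ) (p.coeff (n - j)))
    (hbig : ‖p.coeff (n - lam)‖ >
      (n : ℝ) / (2 * (n - 2 * lam : ℕ)) *
        ∑ k ∈ (Finset.range (n + 1)).filter (fun k => k ≠ lam ∧ k ≠ n - lam),
          ‖p.coeff k‖) :
    Multiset.card (p.roots.filter (fun z => ‖z‖ = 1)) = n - 2 * lam := by
  obtain ⟨w, hw, hp⟩ := hsi
  obtain ⟨u, hu, hsymm⟩ := exists_isConjSymmOn_C_mul hw hp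
  have hu0 : u ≠ 0 := norm_ne_zero_iff.1 (hu ▸ one_ne_zero)
  have hindices : (Finset.range (n + 1)).filter (fun k => k ≠ lam ∧ k ≠ n - lam) =
      Finset.range (n + 1) \ {lam, n - lam} := by
    ext k
    simp
  have hm : (0 : ℝ) < (n - 2 * lam : ℕ) := Nat.cast_pos.2 (Nat.sub_pos_of_lt hlam)
  rw [← roots_C_mul p hu0]
  refine card_unit_roots_of_isConjSymmOn (natDegree_C_mul_le u p |>.trans hdeg) hlam hsymm ?_
  simp only [coeff_C_mul, norm_mul, hu, one_mul]
  rw [gt_iff_lt, hindices, div_mul_eq_mul_div, div_lt_iff₀ (by positivity)] at hbig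
  linarith

open scoped Classical in
/-- If `p` is a self-inversive polynomial of degree `n` and `λ < n/2` with
`|a_{n-λ}| > (1/2) C(n, n-2λ) ∑_{k ≠ λ, n-λ} |aₖ|`, then `p` has exactly `n - 2λ` roots
(with multiplicity) on the unit circle. -/
theorem stmt_5 (n lam : ℕ) (p : Polynomial ℂ) (hdeg : p.natDegree = n) (han : p.coeff n ≠ 0)
    (hlam : 2 * lam < n)
    (hsi : ∃ w : ℂ, ‖w‖ = 1 ∧
      ∀ j ≤ n, p.coeff j = w * (starRingEnd ℂ) (p.coeff (n - j)))
    (hbig : ‖p.coeff (n - lam)‖ >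
      (1 / 2) * (n.choose (n - 2 * lam)) *
        ∑ k ∈ (Finset.range (n + 1)).filter (fun k => k ≠ lam ∧ k ≠ n - lam),
          ‖p.coeff k‖) :
    Multiset.card (p.roots.filter (fun z => ‖z‖ = 1)) = n - 2 * lam :=
  stmt_5_general n lam p hdeg.le hlam hsi (hbig.trans_le' <| by
    gcongr
    exact SelfInversive.div_two_mul_le_half_choose (by lia) (Nat.sub_le _ _))
end

section
/- Let p(z) = \sum_{k=0}^n a_k z^k be a self-inversive polynomial over \mathbb{C} of even degree n. If |a_{n/2}| > 2 \sum_{k=0,\, k \neq n/2}^{n} |a_k|, then p has no roots on the unit circle |z| = 1. -/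
open Polynomial

theorem sum_ne_zero_of_sum_erase_norm_lt_norm {ι E : Type*} [DecidableEq ι]
    [SeminormedAddCommGroup E] {s : Finset ι} {f : ι → E} {i : ι} (hi : i ∈ s)
    (hlt : ∑ j ∈ s.erase i, ‖f j‖ < ‖f i‖) : ∑ j ∈ s, f j ≠ 0 := by
  intro hsum
  have hfi : f i = -∑ j ∈ s.erase i, f j :=
    eq_neg_of_add_eq_zero_right ((Finset.sum_erase_add s f hi).trans hsum)
  refine hlt.not_ge ?_
  calc
    ‖f i‖ = ‖∑ j ∈ s.erase i, f j‖ := by rw [hfi, norm_neg]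
    _ ≤ ∑ j ∈ s.erase i, ‖f j‖ := norm_sum_le _ _

/-- The zero-free part of Pellet's theorem, whose full form also counts the roots inside the
circle of radius `‖z‖`. -/
theorem stmt_6_general {R : Type*} [SeminormedRing R] [NormMulClass R] [NormOneClass R]
    {p : R[X]} {m : ℕ} {z : R}
    (hdom : ∑ k ∈ (Finset.range (p.natDegree + 1)).erase m, ‖p.coeff k‖ * ‖z‖ ^ k <
      ‖p.coeff m‖ * ‖z‖ ^ m) :
    p.eval z ≠ 0 := by
  have hm : p.coeff m ≠ 0 := by
    intro hm
    refine hdom.not_ge ?_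
    rw [hm, norm_zero, zero_mul]
    positivity
  rw [eval_eq_sum_range]
  refine sum_ne_zero_of_sum_erase_norm_lt_norm
    (Finset.mem_range_succ_iff.2 (le_natDegree_of_ne_zero hm)) ?_
  simpa only [norm_mul, norm_pow] using hdom

/-- If `p` is a self-inversive polynomial of even degree `n` with
`|a_{n/2}| > 2 ∑_{k ≠ n/2} |aₖ|`, then `p` has no roots on the unit circle. -/
theorem stmt_6 (n : ℕ) (p : Polynomial ℂ) (hdeg : p.natDegree = n) (han : p.coeff n ≠ 0)
    (hn : Even n)
    (hsi : ∃ w : ℂ, ‖w‖ = 1 ∧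
      ∀ j ≤ n, p.coeff j = w * (starRingEnd ℂ) (p.coeff (n - j)))
    (hbig : ‖p.coeff (n / 2)‖ >
      2 * ∑ k ∈ (Finset.range (n + 1)).filter (fun k => k ≠ n / 2),
        ‖p.coeff k‖) :
    ∀ z : ℂ, ‖z‖ = 1 → p.eval z ≠ 0 := by
  refine fun z hz => stmt_6_general (m := n / 2) ?_
  simpa only [hz, hdeg, Finset.filter_ne', one_pow, mul_one] using
    (le_mul_of_one_le_left (by positivity) one_le_two).trans_lt hbig
end

section
/- Let p(z) = \sum_{k=0}^n a_k z^k be a self-inversive polynomial over \mathbb{C} of degree n which is squarefree (equivalently, has non-zero discriminant, i.e. no repeated roots). If |a_n| \ge \tfrac{1}{2} \sum_{k=1}^{n} |a_k|, then all roots of p lie on the unit circle |z| = 1. -/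
open Polynomial

/-!
Write `q⋆(z) = zⁿ conj(q(1 / conj z))` for a polynomial `q` of degree `n`. If all roots `r` of `q`
lie in the open unit disc, then `q⋆(z) / q(z)` is a unimodular constant times the product of the
factors `(1 - conj r * z) / (z - r)`. Each factor has modulus less than one outside the closed
disc and more than one inside the open disc, so `q + w q⋆` with `‖w‖ = 1` vanishes only on the unit
circle. A self-inversive polynomial `p = w p⋆` satisfies `2 p = q + w q⋆`, where `q` is obtained
from `p` by doubling the leading coefficient and deleting the constant one; the coefficient
inequality makes the leading term of `q` dominate, which puts all its roots in the open disc.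
-/

open ComplexConjugate

section Multiset

variable {ι R : Type*} [CommMonoidWithZero R] [PartialOrder R] [ZeroLEOneClass R]
  [PosMulStrictMono R] [NeZero (1 : R)]

lemma multiset_prod_map_lt_prod_map_of_nonneg {s : Multiset ι} (hs : s ≠ 0) {f g : ι → R}
    (hf : ∀ i ∈ s, 0 ≤ f i) (hfg : ∀ i ∈ s, f i < g i) : (s.map f).prod < (s.map g).prod := by
  by_cases hzero : 0 ∈ s.map f
  · rw [Multiset.prod_eq_zero hzero]
    refine Multiset.prod_pos fun b hb => ?_
    obtain ⟨i, hi, rfl⟩ := Multiset.mem_map.1 hb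
    exact (hf i hi).trans_lt (hfg i hi)
  · refine Multiset.prod_map_lt_prod_map hs f g (fun i hi => ?_) hfg
    exact (hf i hi).lt_of_ne' fun h => hzero (Multiset.mem_map.2 ⟨i, hi, h⟩)

end Multiset

section BlaschkeFactor

lemma sq_norm_sub_sub_sq_norm_one_sub_conj_mul (z r : ℂ) :
    ‖z - r‖ ^ 2 - ‖1 - conj r * z‖ ^ 2 = (‖z‖ ^ 2 - 1) * (1 - ‖r‖ ^ 2) := by
  simp only [Complex.sq_norm, Complex.normSq_apply, Complex.sub_re, Complex.sub_im,
    Complex.mul_re, Complex.mul_im, Complex.conj_re, Complex.conj_im, Complex.one_re,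
    Complex.one_im]
  ring

variable {z r : ℂ}

lemma norm_one_sub_conj_mul_lt_norm_sub (hr : ‖r‖ < 1) (hz : 1 < ‖z‖) :
    ‖1 - conj r * z‖ < ‖z - r‖ := by
  have hr2 : ‖r‖ ^ 2 < 1 := pow_lt_one₀ (norm_nonneg r) hr two_ne_zero
  have hz2 : 1 < ‖z‖ ^ 2 := one_lt_pow₀ hz two_ne_zero
  refine lt_of_pow_lt_pow_left₀ 2 (norm_nonneg _) (sub_pos.1 ?_)
  rw [sq_norm_sub_sub_sq_norm_one_sub_conj_mul]
  exact mul_pos (sub_pos.2 hz2) (sub_pos.2 hr2)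

lemma norm_sub_lt_norm_one_sub_conj_mul (hr : ‖r‖ < 1) (hz : ‖z‖ < 1) :
    ‖z - r‖ < ‖1 - conj r * z‖ := by
  have hr2 : ‖r‖ ^ 2 < 1 := pow_lt_one₀ (norm_nonneg r) hr two_ne_zero
  have hz2 : ‖z‖ ^ 2 < 1 := pow_lt_one₀ (norm_nonneg z) hz two_ne_zero
  refine lt_of_pow_lt_pow_left₀ 2 (norm_nonneg _) (sub_neg.1 ?_)
  rw [sq_norm_sub_sub_sq_norm_one_sub_conj_mul]
  exact mul_neg_of_neg_of_pos (sub_neg.2 hz2) (sub_pos.2 hr2)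

end BlaschkeFactor

section Reverse

lemma reverse_X_sub_C {R : Type*} [Ring R] [Nontrivial R] (r : R) :
    (X - C r).reverse = 1 - C r * X := by
  rw [reverse, natDegree_X_sub_C, reflect_sub, reflect_one_X, reflect_C, pow_one]

variable {R : Type*} [CommRing R] [IsDomain R]

lemma reverse_multiset_prod_X_sub_C (s : Multiset R) :
    (s.map (X - C ·)).prod.reverse = (s.map (1 - C · * X)).prod := by
  induction s using Multiset.induction_on with
  | empty => simpa using reverse_C (1 : R)
  | cons r s ih => simp only [Multiset.map_cons, Multiset.prod_cons, reverse_mul_of_domain,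
      reverse_X_sub_C, ih]

lemma eval_reverse_eq_prod_roots {q : R[X]} (hq : q.Splits) (x : R) :
    q.reverse.eval x = q.leadingCoeff * (q.roots.map (1 - · * x)).prod := by
  conv_lhs => rw [hq.eq_prod_roots, reverse_mul_of_domain, reverse_C, reverse_multiset_prod_X_sub_C]
  simp [eval_multiset_prod]

end Reverse

lemma norm_lt_one_of_sum_norm_coeff_lt {K : Type*} [NormedDivisionRing K] {q : K[X]}
    (hq : ∑ k ∈ Finset.range q.natDegree, ‖q.coeff k‖ < ‖q.leadingCoeff‖) {r : K}
    (hr : q.eval r = 0) : ‖r‖ < 1 := by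
  by_contra! hr1
  have hpow : 0 < ‖r‖ ^ q.natDegree := by positivity
  rw [eval_eq_sum_range, Finset.sum_range_succ, add_eq_zero_iff_neg_eq'] at hr
  have hle : ‖q.leadingCoeff‖ * ‖r‖ ^ q.natDegree ≤
      (∑ k ∈ Finset.range q.natDegree, ‖q.coeff k‖) * ‖r‖ ^ q.natDegree :=
    calc ‖q.leadingCoeff‖ * ‖r‖ ^ q.natDegree
        = ‖∑ k ∈ Finset.range q.natDegree, q.coeff k * r ^ k‖ := by
          rw [← norm_pow, ← norm_mul, leadingCoeff, ← norm_neg, hr]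
      _ ≤ ∑ k ∈ Finset.range q.natDegree, ‖q.coeff k * r ^ k‖ := norm_sum_le _ _
      _ ≤ ∑ k ∈ Finset.range q.natDegree, ‖q.coeff k‖ * ‖r‖ ^ q.natDegree := by
          refine Finset.sum_le_sum fun k hk => ?_
          rw [norm_mul, norm_pow]
          gcongr
          exact (Finset.mem_range.1 hk).le
      _ = _ := (Finset.sum_mul ..).symm
  exact hq.not_ge (le_of_mul_le_mul_right hle hpow)

/-- The conjugate reciprocal `z ↦ z ^ N * conj (q (1 / conj z))` of a polynomial `q`, written `q⋆`
when `N = q.natDegree`. The degree bound `N` is kept as a parameter because `q ↦ conjReflect N q` is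
additive only for fixed `N`. -/
noncomputable def conjReflect (N : ℕ) (q : ℂ[X]) : ℂ[X] :=
  (q.map (starRingEnd ℂ)).reflect N

lemma conjReflect_natDegree (q : ℂ[X]) :
    conjReflect q.natDegree q = (q.map (starRingEnd ℂ)).reverse := by
  rw [conjReflect, reverse, natDegree_map]

lemma eq_C_mul_conjReflect {p : ℂ[X]} {w : ℂ}
    (hp : ∀ j ≤ p.natDegree, p.coeff j = w * conj (p.coeff (p.natDegree - j))) :
    p = C w * conjReflect p.natDegree p := by
  ext j
  rw [coeff_C_mul, conjReflect, coeff_reflect, coeff_map]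
  rcases le_or_gt j p.natDegree with hj | hj
  · rw [revAt_le hj, hp j hj]
  · rw [revAt_eq_self_of_lt hj, coeff_eq_zero_of_natDegree_lt hj, map_zero, mul_zero]

section RootsInDisc

lemma norm_eval_eq_prod_roots (q : ℂ[X]) (z : ℂ) :
    ‖q.eval z‖ = ‖q.leadingCoeff‖ * (q.roots.map (‖z - ·‖)).prod := by
  rw [(IsAlgClosed.splits q).eval_eq_prod_roots, norm_mul, ← normHom_apply (Multiset.prod _),
    map_multiset_prod, Multiset.map_map]
  rfl

lemma norm_eval_conjReflect_eq_prod_roots (q : ℂ[X]) (z : ℂ) :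
    ‖(conjReflect q.natDegree q).eval z‖ =
      ‖q.leadingCoeff‖ * (q.roots.map (‖1 - conj · * z‖)).prod := by
  have hsplits : q.Splits := IsAlgClosed.splits q
  rw [conjReflect_natDegree, eval_reverse_eq_prod_roots (hsplits.map _), leadingCoeff_map,
    hsplits.roots_map, norm_mul, Complex.norm_conj, ← normHom_apply (Multiset.prod _),
    map_multiset_prod, Multiset.map_map, Multiset.map_map]
  rfl

variable {q : ℂ[X]} {z : ℂ}

lemma norm_eval_conjReflect_lt_norm_eval (hdeg : q.natDegree ≠ 0)
    (hroots : ∀ r, q.eval r = 0 → ‖r‖ < 1) (hz : 1 < ‖z‖) :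
    ‖(conjReflect q.natDegree q).eval z‖ < ‖q.eval z‖ := by
  have hq : q ≠ 0 := ne_zero_of_natDegree_gt (Nat.pos_of_ne_zero hdeg)
  rw [norm_eval_conjReflect_eq_prod_roots, norm_eval_eq_prod_roots]
  refine mul_lt_mul_of_pos_left ?_ (norm_pos_iff.2 (leadingCoeff_ne_zero.2 hq))
  exact multiset_prod_map_lt_prod_map_of_nonneg ((IsAlgClosed.splits q).roots_ne_zero hdeg)
    (fun _ _ => norm_nonneg _)
    fun r hr => norm_one_sub_conj_mul_lt_norm_sub (hroots r (isRoot_of_mem_roots hr)) hz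

lemma norm_eval_lt_norm_eval_conjReflect (hdeg : q.natDegree ≠ 0)
    (hroots : ∀ r, q.eval r = 0 → ‖r‖ < 1) (hz : ‖z‖ < 1) :
    ‖q.eval z‖ < ‖(conjReflect q.natDegree q).eval z‖ := by
  have hq : q ≠ 0 := ne_zero_of_natDegree_gt (Nat.pos_of_ne_zero hdeg)
  rw [norm_eval_conjReflect_eq_prod_roots, norm_eval_eq_prod_roots]
  refine mul_lt_mul_of_pos_left ?_ (norm_pos_iff.2 (leadingCoeff_ne_zero.2 hq))
  exact multiset_prod_map_lt_prod_map_of_nonneg ((IsAlgClosed.splits q).roots_ne_zero hdeg)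
    (fun _ _ => norm_nonneg _)
    fun r hr => norm_sub_lt_norm_one_sub_conj_mul (hroots r (isRoot_of_mem_roots hr)) hz

theorem norm_eq_one_of_eval_add_C_mul_conjReflect_eq_zero (hdeg : q.natDegree ≠ 0)
    (hroots : ∀ r, q.eval r = 0 → ‖r‖ < 1) {w : ℂ} (hw : ‖w‖ = 1)
    (hz : (q + C w * conjReflect q.natDegree q).eval z = 0) : ‖z‖ = 1 := by
  have hnorm : ‖q.eval z‖ = ‖(conjReflect q.natDegree q).eval z‖ := by
    rw [eval_add, eval_C_mul] at hz
    rw [eq_neg_of_add_eq_zero_left hz, norm_neg, norm_mul, hw, one_mul]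
  rcases lt_trichotomy ‖z‖ 1 with hlt | heq | hgt
  · exact absurd hnorm (norm_eval_lt_norm_eval_conjReflect hdeg hroots hlt).ne
  · exact heq
  · exact absurd hnorm (norm_eval_conjReflect_lt_norm_eval hdeg hroots hgt).ne'

end RootsInDisc

/-- The polynomial obtained from `p` by doubling its leading coefficient and deleting its constant
one (for `p` of positive degree). When `p` is self-inversive it is a summand `q` in a splitting
`2 * p = q + w * q⋆`. -/
noncomputable def topHeavyPart (p : ℂ[X]) : ℂ[X] :=
  p + C p.leadingCoeff * X ^ p.natDegree - C (p.coeff 0)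

section TopHeavyPart

variable {p : ℂ[X]}

lemma topHeavyPart_add_C_mul_conjReflect {w : ℂ}
    (hp : ∀ j ≤ p.natDegree, p.coeff j = w * conj (p.coeff (p.natDegree - j))) :
    topHeavyPart p + C w * conjReflect p.natDegree (topHeavyPart p) = C 2 * p := by
  have hconst : p.coeff 0 = w * conj p.leadingCoeff := hp 0 (Nat.zero_le _)
  have hlead : p.leadingCoeff = w * conj (p.coeff 0) := by
    simpa only [leadingCoeff, Nat.sub_self] using hp p.natDegree le_rfl
  have hreflect : conjReflect p.natDegree (topHeavyPart p) = conjReflect p.natDegree p +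
      C (conj p.leadingCoeff) - C (conj (p.coeff 0)) * X ^ p.natDegree := by
    simp [conjReflect, topHeavyPart, reflect_sub, reflect_add]
  calc topHeavyPart p + C w * conjReflect p.natDegree (topHeavyPart p)
      = p + C w * conjReflect p.natDegree p +
          (C p.leadingCoeff - C (w * conj (p.coeff 0))) * X ^ p.natDegree +
          (C (w * conj p.leadingCoeff) - C (p.coeff 0)) := by
        rw [hreflect, topHeavyPart, C_mul, C_mul]
        ring
    _ = C 2 * p := by
        rw [← eq_C_mul_conjReflect hp, ← hlead, ← hconst, sub_self, sub_self, zero_mul, add_zero,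
          add_zero, ← two_mul, map_ofNat]

lemma coeff_topHeavyPart_zero (hdeg : p.natDegree ≠ 0) : (topHeavyPart p).coeff 0 = 0 := by
  simp [topHeavyPart, coeff_X_pow, hdeg.symm]

lemma coeff_topHeavyPart_of_ne {k : ℕ} (hk0 : k ≠ 0) (hk : k ≠ p.natDegree) :
    (topHeavyPart p).coeff k = p.coeff k := by
  simp [topHeavyPart, coeff_X_pow, coeff_C, hk0, hk]

lemma coeff_topHeavyPart_natDegree (hdeg : p.natDegree ≠ 0) :
    (topHeavyPart p).coeff p.natDegree = 2 * p.leadingCoeff := by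
  simp [topHeavyPart, coeff_C, hdeg, two_mul]

lemma natDegree_topHeavyPart (p : ℂ[X]) : (topHeavyPart p).natDegree = p.natDegree := by
  have hle : (topHeavyPart p).natDegree ≤ p.natDegree := by
    refine natDegree_le_iff_coeff_eq_zero.2 fun k hk => ?_
    rw [coeff_topHeavyPart_of_ne (Nat.ne_zero_of_lt hk) hk.ne', coeff_eq_zero_of_natDegree_lt hk]
  rcases eq_or_ne p.natDegree 0 with hdeg | hdeg
  · omega
  · refine natDegree_eq_of_le_of_coeff_ne_zero hle ?_
    have hp : p ≠ 0 := ne_zero_of_natDegree_gt (Nat.pos_of_ne_zero hdeg)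
    rw [coeff_topHeavyPart_natDegree hdeg]
    exact mul_ne_zero two_ne_zero (leadingCoeff_ne_zero.2 hp)

lemma sum_norm_coeff_topHeavyPart_lt (hdeg : p.natDegree ≠ 0)
    (hbig : (1 / 2) * ∑ k ∈ Finset.Icc 1 p.natDegree, ‖p.coeff k‖ ≤ ‖p.leadingCoeff‖) :
    ∑ k ∈ Finset.range (topHeavyPart p).natDegree, ‖(topHeavyPart p).coeff k‖ <
      ‖(topHeavyPart p).leadingCoeff‖ := by
  have hpos : 0 < p.natDegree := Nat.pos_of_ne_zero hdeg
  have hp : p ≠ 0 := ne_zero_of_natDegree_gt hpos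
  have hlead : 0 < ‖p.leadingCoeff‖ := norm_pos_iff.2 (leadingCoeff_ne_zero.2 hp)
  have hinner : ∑ k ∈ Finset.range p.natDegree, ‖(topHeavyPart p).coeff k‖ =
      ∑ k ∈ Finset.Ico 1 p.natDegree, ‖p.coeff k‖ := by
    rw [Finset.range_eq_Ico, Finset.sum_eq_sum_Ico_succ_bot hpos, coeff_topHeavyPart_zero hdeg,
      norm_zero, zero_add]
    refine Finset.sum_congr rfl fun k hk => ?_
    obtain ⟨hk1, hkn⟩ := Finset.mem_Ico.1 hk
    rw [coeff_topHeavyPart_of_ne (Nat.one_le_iff_ne_zero.1 hk1) hkn.ne]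
  rw [leadingCoeff, natDegree_topHeavyPart, hinner, coeff_topHeavyPart_natDegree hdeg, norm_mul,
    Complex.norm_ofNat]
  rw [← Finset.sum_Ico_add_eq_sum_Icc hpos, ← leadingCoeff] at hbig
  linarith

end TopHeavyPart

theorem stmt_7_general (n : ℕ) (p : Polynomial ℂ) (hdeg : p.natDegree = n) (han : p.coeff n ≠ 0)
    (hsi : ∃ w : ℂ, ‖w‖ = 1 ∧
      ∀ j ≤ n, p.coeff j = w * (starRingEnd ℂ) (p.coeff (n - j)))
    (hbig : ‖p.coeff n‖ ≥
      (1 / 2) * ∑ k ∈ Finset.Icc 1 n, ‖p.coeff k‖) :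
    ∀ z : ℂ, p.eval z = 0 → ‖z‖ = 1 := by
  intro z hz
  subst hdeg
  obtain ⟨w, hw, hcoeff⟩ := hsi
  have hpos : p.natDegree ≠ 0 :=
    (natDegree_pos_iff_degree_pos.2 (degree_pos_of_root (leadingCoeff_ne_zero.1 han) hz)).ne'
  have hroots : ∀ r, (topHeavyPart p).eval r = 0 → ‖r‖ < 1 := fun r =>
    norm_lt_one_of_sum_norm_coeff_lt (sum_norm_coeff_topHeavyPart_lt hpos hbig)
  have hsplit := topHeavyPart_add_C_mul_conjReflect hcoeff
  rw [← natDegree_topHeavyPart] at hpos hsplit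
  refine norm_eq_one_of_eval_add_C_mul_conjReflect_eq_zero hpos hroots hw ?_
  rw [hsplit, eval_mul, hz, mul_zero]

/-- (Lakatos–Losonczi) A squarefree self-inversive polynomial of degree `n` with
`|aₙ| ≥ (1/2) ∑_{k=1}^{n} |aₖ|` has all its roots on the unit circle. -/
theorem stmt_7 (n : ℕ) (p : Polynomial ℂ) (hdeg : p.natDegree = n) (han : p.coeff n ≠ 0)
    (hsq : Squarefree p)
    (hsi : ∃ w : ℂ, ‖w‖ = 1 ∧
      ∀ j ≤ n, p.coeff j = w * (starRingEnd ℂ) (p.coeff (n - j)))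
    (hbig : ‖p.coeff n‖ ≥
      (1 / 2) * ∑ k ∈ Finset.Icc 1 n, ‖p.coeff k‖) :
    ∀ z : ℂ, p.eval z = 0 → ‖z‖ = 1 :=
  stmt_7_general n p hdeg han hsi hbig
end

section
/- (Mallows–Sloane–Duursma bound.) Let n \ge d \ge 1 be integers and let F(x,y) = x^n + \sum_{i=d}^{n} f_i x^{n-i} y^i be a homogeneous polynomial of degree n with real coefficients and f_d \neq 0, which is virtually self-dual over \mathbb{F}_q, i.e. F(x,y) = F\big((x + (q-1)y)/\sqrt{q}, (x - y)/\sqrt{q}\big) as polynomials, and which is b-divisible, i.e. f_i \neq 0 implies b \mid i. Then: if q = 2, b = 2 and 2 \mid n (Type I), then d \le 2\lfloor n/8 \rfloor + 2; if q = 2, b = 4 and 8 \mid n (Type II), then d \le 4\lfloor n/24 \rfloor + 4; if q = 3, b = 3 and 4 \mid n (Type III), then d \le 3\lfloor n/12 \rfloor + 3; and if q = 4, b = 2 and 2 \mid n (Type IV), then d \le 2\lfloor n/6 \rfloor + 2. -/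
/-!
Following Duursma, view a form `p` in two variables as the differential operator `p(∂)`. By the
chain rule `p(∂)(F ∘ M) = ((p ∘ Mᵀ)(∂) F) ∘ M`, so if `F` is invariant under `M` and `p` is a
relative invariant of `Mᵀ`, then `G = p(∂)F` is a relative invariant of `M`. Take
`p = y ((q - 1)ᵇ xᵇ - yᵇ)` in Types III and IV, and `x` times this in Types I and II. This `p` is a
relative invariant of both the transposed MacWilliams transform and the maps `(x, y) ↦ (x, ζ y)`
with `ζᵇ = 1`, and `G` has order exactly `k = d - (b + 1)` in `y`. The symmetries carry the divisor
`yᵏ` of `G` to `(x - y)ᵏ`, then to `(x - ζ y)ᵏ` for all `ζ`, and, for `q = 2` and `b` even, from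
`(x + y)ᵏ` to `xᵏ`. Hence `(y (xᵇ - yᵇ))ᵏ`, respectively `(x y (xᵇ - yᵇ))ᵏ`, divides `G ≠ 0`, and
comparing degrees bounds `d`.
-/

namespace BinaryForm

open MvPolynomial Matrix

section DiffOp

variable {σ K : Type*} [CommRing K]

variable (σ K) in
/-- The algebra of differential operators on `K[σ]` with constant coefficients. -/
noncomputable abbrev ConstCoeffOp : Subalgebra K (Module.End K (MvPolynomial σ K)) :=
  Algebra.adjoin K (Set.range fun i => (pderiv i).toLinearMap)

lemma pderiv_pderiv_comm (i j : σ) (P : MvPolynomial σ K) :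
    pderiv i (pderiv j P) = pderiv j (pderiv i P) := by
  classical
  have h : (⁅pderiv i, pderiv j⁆ : Derivation K (MvPolynomial σ K) (MvPolynomial σ K)) = 0 :=
    derivation_ext fun k => by
      rw [Derivation.commutator_apply]
      simp [pderiv_X, Pi.single_apply, apply_ite]
  rw [← sub_eq_zero, ← Derivation.commutator_apply, h, Derivation.zero_apply]

instance : IsMulCommutative (ConstCoeffOp σ K) :=
  Algebra.isMulCommutative_adjoin K <| by
    rintro _ ⟨i, rfl⟩ _ ⟨j, rfl⟩
    exact LinearMap.ext (pderiv_pderiv_comm i j)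

open scoped IsMulCommutative in
/-- The constant-coefficient differential operator `p(∂)` obtained from a polynomial `p` by
replacing each variable by the corresponding partial derivative. -/
noncomputable def diffOp : MvPolynomial σ K →ₐ[K] Module.End K (MvPolynomial σ K) :=
  (ConstCoeffOp σ K).val.comp <| aeval fun i => ⟨_, Algebra.subset_adjoin ⟨i, rfl⟩⟩

@[simp]
lemma diffOp_X (i : σ) (P : MvPolynomial σ K) : diffOp (X i) P = pderiv i P := by
  simp [diffOp]

@[simp]
lemma diffOp_C (a : K) (P : MvPolynomial σ K) : diffOp (C a) P = C a * P := by
  rw [← algebraMap_eq, AlgHom.commutes, Module.algebraMap_end_apply, algebraMap_eq, smul_eq_C_mul]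

lemma diffOp_X_pow (i : σ) (m : ℕ) (P : MvPolynomial σ K) :
    diffOp (X i ^ m) P = (pderiv i)^[m] P := by
  rw [map_pow, Module.End.pow_apply]
  exact congrArg (fun g => g^[m] P) (funext (diffOp_X i))

lemma isHomogeneous_diffOp_monomial {P : MvPolynomial σ K} {n : ℕ} (hP : P.IsHomogeneous n)
    (s : σ →₀ ℕ) : (diffOp (monomial s 1) P).IsHomogeneous (n - s.degree) := by
  induction s using Finsupp.induction_linear generalizing P n with
  | zero => simpa [← C_apply] using hP
  | add s t hs ht =>
    rw [← one_mul (1 : K), ← monomial_mul, map_mul, Module.End.mul_apply, map_add, add_comm,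
      ← Nat.sub_sub]
    exact hs (ht hP)
  | single i k =>
    rw [← X_pow_eq_monomial, diffOp_X_pow, Finsupp.degree_single]
    induction k with
    | zero => simpa using hP
    | succ k ih =>
      rw [Function.iterate_succ_apply', ← Nat.sub_sub]
      exact ih.pderiv

lemma isHomogeneous_diffOp {p P : MvPolynomial σ K} {m n : ℕ} (hp : p.IsHomogeneous m)
    (hP : P.IsHomogeneous n) : (diffOp p P).IsHomogeneous (n - m) := by
  rw [p.as_sum, map_sum, LinearMap.sum_apply]
  refine IsHomogeneous.sum _ _ _ fun s hs => ?_
  have hdeg : s.degree = m := by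
    rw [Finsupp.degree_eq_weight_one]
    exact hp (mem_support_iff.1 hs)
  rw [← mul_one (coeff s p), ← C_mul_monomial, map_mul, Module.End.mul_apply, diffOp_C, ← hdeg]
  exact (isHomogeneous_diffOp_monomial hP s).C_mul _

end DiffOp

section LinSubst

variable {σ τ K : Type*} [CommRing K] [Fintype τ]

/-- The linear change of variables `P ↦ P ∘ M`, which replaces the `i`-th variable by the linear
form whose coefficients are the `i`-th row of `M`. -/
noncomputable def linSubst (M : Matrix σ τ K) : MvPolynomial σ K →ₐ[K] MvPolynomial τ K :=
  aeval M.toMvPolynomial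

@[simp]
lemma linSubst_C (M : Matrix σ τ K) (a : K) : linSubst M (C a) = C a :=
  algHom_C _ _

lemma linSubst_X (M : Matrix σ τ K) (i : σ) : linSubst M (X i) = ∑ j, C (M i j) * X j := by
  simp [linSubst, Matrix.toMvPolynomial, ← C_mul_X_eq_monomial]

lemma map_linSubst {L : Type*} [CommRing L] (φ : K →+* L) (M : Matrix σ τ K)
    (P : MvPolynomial σ K) : map φ (linSubst M P) = linSubst (M.map φ) (map φ P) := by
  induction P using MvPolynomial.induction_on with
  | C a => simp
  | add P Q hP hQ => simp only [map_add, hP, hQ]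
  | mul_X P i hP => simp [hP, linSubst_X]

lemma eval_linSubst (M : Matrix σ τ K) (P : MvPolynomial σ K) (v : τ → K) :
    eval v (linSubst M P) = eval (M *ᵥ v) P := by
  induction P using MvPolynomial.induction_on with
  | C a => simp
  | add P Q hP hQ => simp only [map_add, hP, hQ]
  | mul_X P i hP => simp [hP, linSubst_X, mulVec_eq_sum, mul_comm]

variable [Fintype σ]

lemma pderiv_linSubst (M : Matrix σ τ K) (j : τ) (P : MvPolynomial σ K) :
    pderiv j (linSubst M P) = ∑ i, C (M i j) * linSubst M (pderiv i P) := by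
  classical
  induction P using MvPolynomial.induction_on with
  | C a => simp
  | add P Q hP hQ => simp only [map_add, hP, hQ, mul_add, Finset.sum_add_distrib]
  | mul_X P i hP =>
    have hX : pderiv j (linSubst M (X i)) = C (M i j) := by
      simp [linSubst_X, pderiv_X, Pi.single_apply]
    rw [map_mul, Derivation.leibniz, hP, hX]
    simp [pderiv_X, Pi.single_apply, apply_ite, mul_add, Finset.sum_add_distrib, Finset.mul_sum,
      mul_left_comm, mul_comm]

lemma diffOp_linSubst (M : Matrix σ τ K) (p : MvPolynomial τ K) (P : MvPolynomial σ K) :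
    diffOp p (linSubst M P) = linSubst M (diffOp (linSubst Mᵀ p) P) := by
  induction p using MvPolynomial.induction_on generalizing P with
  | C a => simp
  | add p q hp hq => simp only [map_add, LinearMap.add_apply, hp, hq]
  | mul_X p j hp =>
    have hX : pderiv j (linSubst M P) = linSubst M (diffOp (linSubst Mᵀ (X j)) P) := by
      simp [pderiv_linSubst, linSubst_X, smul_eq_C_mul]
    rw [map_mul, map_mul, map_mul, Module.End.mul_apply, Module.End.mul_apply, diffOp_X, hX, hp]

end LinSubst

section RelInvariant

variable {σ K : Type*} [CommRing K] [Fintype σ]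

/-- `G` is a relative invariant of the change of variables `M`: it agrees with `G ∘ M` up to a
scalar. -/
def IsRelInvariant (M : Matrix σ σ K) (G : MvPolynomial σ K) : Prop :=
  ∃ c : K, G = c • linSubst M G

lemma isRelInvariant_diffOp {M : Matrix σ σ K} {F p : MvPolynomial σ K} {c : K}
    (hF : linSubst M F = F) (hp : linSubst Mᵀ p = C c * p) : IsRelInvariant M (diffOp p F) := by
  refine ⟨c, ?_⟩
  conv_lhs => rw [← hF, diffOp_linSubst, hp, map_mul, Module.End.mul_apply, diffOp_C,
    ← smul_eq_C_mul, map_smul]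

lemma IsRelInvariant.pow_dvd {M : Matrix σ σ K} {G ℓ : MvPolynomial σ K} {k : ℕ}
    (hG : IsRelInvariant M G) (h : ℓ ^ k ∣ G) : linSubst M ℓ ^ k ∣ G := by
  obtain ⟨c, hc⟩ := hG
  rw [hc, ← map_pow]
  exact dvd_smul_of_dvd c (map_dvd _ h)

end RelInvariant

section Order

lemma emultiplicity_sum_mul_pow {R : Type*} [CommRing R] [IsDomain R] {p : R} (hp : p ≠ 0)
    {d n : ℕ} (hdn : d ≤ n) {u : ℕ → R} (hu : ¬ p ∣ u d) :
    emultiplicity p (∑ i ∈ Finset.Icc d n, u i * p ^ i) = d := by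
  have htail : p ^ (d + 1) ∣ ∑ i ∈ Finset.Ioc d n, u i * p ^ i :=
    Finset.dvd_sum fun i hi => (pow_dvd_pow p (Finset.mem_Ioc.1 hi).1).mul_left _
  rw [Finset.Icc_eq_cons_Ioc hdn, Finset.sum_cons, emultiplicity_eq_coe]
  refine ⟨dvd_add (dvd_mul_left _ _) ((pow_dvd_pow p d.le_succ).trans htail), fun h => hu ?_⟩
  rw [dvd_add_left htail, pow_succ', mul_dvd_mul_iff_right (pow_ne_zero d hp)] at h
  exact h

variable {K A : Type*} [Field K] [CommRing A] [Algebra K A] {D : Derivation K A A} {p x : A}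

lemma pow_dvd_derivation_iterate_of_apply_eq_zero {k : ℕ} (hDp : D p = 0) (h : p ^ k ∣ x)
    (m : ℕ) : p ^ k ∣ D^[m] x := by
  induction m with
  | zero => exact h
  | succ m ih =>
    obtain ⟨y, hy⟩ := ih
    rw [Function.iterate_succ_apply', hy, D.leibniz, D.leibniz_pow, hDp, smul_zero, smul_zero,
      smul_zero, add_zero]
    exact dvd_mul_right _ _

lemma emultiplicity_derivation [CharZero K] [IsDomain A] {k : ℕ} (hp : Prime p)
    (hDp : ¬ p ∣ D p) (hx : emultiplicity p x = (k + 1 : ℕ)) : emultiplicity p (D x) = k := by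
  obtain ⟨⟨y, rfl⟩, hmax⟩ := emultiplicity_eq_coe.1 hx
  have hy : ¬ p ∣ y := fun h => hmax <| by rw [pow_succ]; exact mul_dvd_mul_left _ h
  have hD : D (p ^ (k + 1) * y) = p ^ k * (p * D y + ((k : K) + 1) • (y * D p)) := by
    simp only [D.leibniz, D.leibniz_pow, smul_eq_mul, Nat.cast_smul_eq_nsmul, nsmul_eq_mul,
      add_smul, one_smul, add_tsub_cancel_right]
    ring
  have hk : (k : K) + 1 ≠ 0 := by exact_mod_cast k.succ_ne_zero
  rw [hD, emultiplicity_eq_coe]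
  refine ⟨dvd_mul_right _ _, fun h => ?_⟩
  rw [pow_succ, mul_dvd_mul_iff_left (pow_ne_zero k hp.ne_zero),
    dvd_add_right (dvd_mul_right _ _)] at h
  have hyDp : p ∣ y * D p := by
    simpa only [inv_smul_smul₀ hk] using dvd_smul_of_dvd ((k : K) + 1)⁻¹ h
  exact (hp.dvd_or_dvd hyDp).elim hy hDp

lemma emultiplicity_derivation_iterate [CharZero K] [IsDomain A] {k m : ℕ} (hp : Prime p)
    (hDp : ¬ p ∣ D p) (hx : emultiplicity p x = (k + m : ℕ)) :
    emultiplicity p (D^[m] x) = k := by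
  induction m generalizing x with
  | zero => exact hx
  | succ m ih => exact ih (emultiplicity_derivation hp hDp hx)

end Order

section Coprime

lemma isRelPrime_sub_mul_sub_mul {R : Type*} [CommRing R] {x y a b : R} (h : IsRelPrime x y)
    (hab : IsUnit (a - b)) : IsRelPrime (x - a * y) (x - b * y) := by
  intro p hpa hpb
  have hy : p ∣ y := by
    rw [← hab.dvd_mul_left]
    convert dvd_sub hpb hpa using 1
    ring
  exact h ((dvd_sub_left (hy.mul_left a)).1 hpa) hy

lemma isRelPrime_pow_sub_pow_right {R : Type*} [CommRing R] [DecompositionMonoid R]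
    {x y : R} (h : IsRelPrime x y) {b : ℕ} (hb : b ≠ 0) : IsRelPrime y (x ^ b - y ^ b) := by
  intro p hy hp
  exact h.symm.pow_right hy ((dvd_sub_left (hy.trans (dvd_pow_self y hb))).1 hp)

lemma isRelPrime_pow_sub_pow_left {R : Type*} [CommRing R] [DecompositionMonoid R]
    {x y : R} (h : IsRelPrime x y) {b : ℕ} (hb : b ≠ 0) : IsRelPrime x (x ^ b - y ^ b) := by
  rw [← neg_sub, IsRelPrime.neg_right_iff]
  exact isRelPrime_pow_sub_pow_right h.symm hb

lemma add_dvd_pow_sub_pow_of_even {R : Type*} [CommRing R] (x y : R) {b : ℕ} (hb : Even b) :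
    x + y ∣ x ^ b - y ^ b := by
  simpa only [hb.neg_pow, sub_neg_eq_add] using sub_dvd_pow_sub_pow x (-y) b

lemma pow_sub_pow_pow_dvd_of_forall_root {K R : Type*} [Field K] [CommRing R] [IsDomain R]
    [DecompositionMonoid R] [Algebra K R] {b k : ℕ} {z : K} {x y G : R} (hb : 0 < b)
    (hz : IsPrimitiveRoot z b) (hxy : IsRelPrime x y)
    (h : ∀ ζ : K, ζ ^ b = 1 → (x - algebraMap K R ζ * y) ^ k ∣ G) : (x ^ b - y ^ b) ^ k ∣ G := by
  have hz' : IsPrimitiveRoot (algebraMap K R z) b :=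
    hz.map_of_injective (FaithfulSMul.algebraMap_injective K R)
  have hroot {w : R} (hw : w ∈ Polynomial.nthRootsFinset b (1 : R)) :
      ∃ ζ : K, ζ ^ b = 1 ∧ algebraMap K R ζ = w := by
    have : NeZero b := ⟨hb.ne'⟩
    obtain ⟨i, -, rfl⟩ := hz'.eq_pow_of_pow_eq_one ((Polynomial.mem_nthRootsFinset hb 1).1 hw)
    exact ⟨z ^ i, by rw [pow_right_comm, hz.pow_eq_one, one_pow], map_pow _ _ _⟩
  rw [hz'.pow_sub_pow_eq_prod_sub_mul x y hb, ← Finset.prod_pow]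
  refine Finset.prod_dvd_of_isRelPrime (fun w hw v hv hwv => ?_) fun w hw => ?_
  · obtain ⟨ζ, -, rfl⟩ := hroot hw
    obtain ⟨ξ, -, rfl⟩ := hroot hv
    have hne : ζ - ξ ≠ 0 := sub_ne_zero.2 fun h => hwv (congrArg _ h)
    refine (isRelPrime_sub_mul_sub_mul hxy ?_).pow
    rw [← map_sub]
    exact (IsUnit.mk0 _ hne).map (algebraMap K R)
  · obtain ⟨ζ, hζ, rfl⟩ := hroot hw
    exact h ζ hζ

end Coprime

section Binary

variable {K : Type*} [Field K]

lemma isRelPrime_X_zero_X_one :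
    IsRelPrime (X 0 : MvPolynomial (Fin 2) K) (X 1) := by
  refine (X_prime.irreducible.isRelPrime_iff_not_dvd).2 ?_
  rw [X_dvd_X]
  simp

/-- The matrix of the MacWilliams transform `(x, y) ↦ (s (x + (q - 1) y), s (x - y))`. For codes
over a field with `q` elements the scalar `s` is `1 / √q`. -/
def macWilliamsMatrix (q s : K) : Matrix (Fin 2) (Fin 2) K :=
  !![s, s * (q - 1); s, -s]

lemma linSubst_macWilliamsMatrix_X_one (q s : K) :
    linSubst (macWilliamsMatrix q s) (X 1) = C s * (X 0 - X 1) := by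
  rw [linSubst_X, Fin.sum_univ_two]
  simp only [macWilliamsMatrix, of_apply, cons_val', cons_val_zero, cons_val_one,
    cons_val_fin_one, C_neg]
  ring

lemma linSubst_macWilliamsMatrix_two_add (s : K) :
    linSubst (macWilliamsMatrix 2 s) (X 0 + X 1) = C (2 * s) * X 0 := by
  rw [map_add, linSubst_macWilliamsMatrix_X_one, linSubst_X, Fin.sum_univ_two]
  simp only [macWilliamsMatrix, of_apply, cons_val', cons_val_zero, cons_val_one,
    cons_val_fin_one, C_mul, C_sub, C_1, map_ofNat C]
  ring

lemma linSubst_diagonal_X {σ : Type*} [Fintype σ] [DecidableEq σ] (v : σ → K) (i : σ) :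
    linSubst (diagonal v) (X i) = C (v i) * X i := by
  simp [linSubst_X, diagonal_apply, apply_ite C, ite_mul]

/-- Duursma's form `y (a x ^ b - y ^ b)`, applied as a differential operator with
`a = (q - 1) ^ b`. It is then a relative invariant of the transposed MacWilliams transform in
Types III and IV; in Types I and II its product with `x` is one. For `a = 1` it is the form whose
powers divide the resulting derivative. -/
noncomputable def duursmaForm (a : K) (b : ℕ) : MvPolynomial (Fin 2) K :=
  (C a * X 0 ^ b - X 1 ^ b) * X 1

lemma duursmaForm_one (b : ℕ) :
    duursmaForm (1 : K) b = (X 0 ^ b - X 1 ^ b) * X 1 := by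
  rw [duursmaForm, C_1, one_mul]

lemma isHomogeneous_duursmaForm (a : K) (b : ℕ) : (duursmaForm a b).IsHomogeneous (b + 1) :=
  (((isHomogeneous_X_pow _ _).C_mul a).sub (isHomogeneous_X_pow _ _)).mul (isHomogeneous_X _ _)

/-- `G` is invariant up to scalars under the symmetries of a `b`-divisible virtually self-dual
weight enumerator over a field with `q` elements: the MacWilliams transform, and the scaling of
the second variable by any `b`-th root of unity. -/
structure IsSelfDualRelInvariant (q s : K) (b : ℕ) (G : MvPolynomial (Fin 2) K) : Prop where
  macWilliams : IsRelInvariant (macWilliamsMatrix q s) G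
  diagonal (ζ : K) (hζ : ζ ^ b = 1) : IsRelInvariant (Matrix.diagonal ![1, ζ]) G

namespace IsSelfDualRelInvariant

variable {q s z : K} {b k : ℕ} {G : MvPolynomial (Fin 2) K}

lemma pow_sub_pow_pow_dvd (hG : IsSelfDualRelInvariant q s b G) (hb : 0 < b)
    (hz : IsPrimitiveRoot z b) (h : X 1 ^ k ∣ G) : (X 0 ^ b - X 1 ^ b) ^ k ∣ G := by
  have hsub : (X 0 - X 1) ^ k ∣ G := by
    refine (pow_dvd_pow_of_dvd (dvd_mul_left _ (C s)) k).trans ?_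
    rw [← linSubst_macWilliamsMatrix_X_one q s]
    exact hG.macWilliams.pow_dvd h
  refine pow_sub_pow_pow_dvd_of_forall_root hb hz isRelPrime_X_zero_X_one fun ζ hζ => ?_
  simpa [linSubst_diagonal_X] using (hG.diagonal ζ hζ).pow_dvd hsub

lemma duursmaForm_one_pow_dvd (hG : IsSelfDualRelInvariant q s b G) (hb : 0 < b)
    (hz : IsPrimitiveRoot z b) (h : X 1 ^ k ∣ G) : duursmaForm 1 b ^ k ∣ G := by
  rw [duursmaForm_one, mul_pow]
  exact (isRelPrime_pow_sub_pow_right isRelPrime_X_zero_X_one hb.ne').symm.pow.mul_dvd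
    (hG.pow_sub_pow_pow_dvd hb hz h) h

lemma X_zero_mul_duursmaForm_one_pow_dvd (hG : IsSelfDualRelInvariant 2 s b G)
    (hb : 0 < b) (heven : Even b) (hz : IsPrimitiveRoot z b) (h : X 1 ^ k ∣ G) :
    (X 0 * duursmaForm 1 b) ^ k ∣ G := by
  have hadd : (X 0 + X 1) ^ k ∣ G :=
    (pow_dvd_pow_of_dvd (add_dvd_pow_sub_pow_of_even _ _ heven) k).trans
      (hG.pow_sub_pow_pow_dvd hb hz h)
  have hX : X 0 ^ k ∣ G := by
    refine (pow_dvd_pow_of_dvd (dvd_mul_left _ (C (2 * s))) k).trans ?_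
    rw [← linSubst_macWilliamsMatrix_two_add]
    exact hG.macWilliams.pow_dvd hadd
  have hrel : IsRelPrime (X 0 : MvPolynomial (Fin 2) K) (duursmaForm 1 b) := by
    rw [duursmaForm_one]
    exact (isRelPrime_pow_sub_pow_left isRelPrime_X_zero_X_one hb.ne').mul_right
      isRelPrime_X_zero_X_one
  rw [mul_pow]
  exact hrel.pow.mul_dvd hX (hG.duursmaForm_one_pow_dvd hb hz h)

end IsSelfDualRelInvariant

lemma isSelfDualRelInvariant_diffOp {q s c : K} {b : ℕ} {p F : MvPolynomial (Fin 2) K}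
    (hF : linSubst (macWilliamsMatrix q s) F = F)
    (hFdiag : ∀ ζ : K, ζ ^ b = 1 → linSubst (diagonal ![1, ζ]) F = F)
    (hp : linSubst (macWilliamsMatrix q s)ᵀ p = C c * p)
    (hpdiag : ∀ ζ : K, ζ ^ b = 1 → linSubst (diagonal ![1, ζ]) p = C ζ * p) :
    IsSelfDualRelInvariant q s b (diffOp p F) where
  macWilliams := isRelInvariant_diffOp hF hp
  diagonal ζ hζ :=
    isRelInvariant_diffOp (hFdiag ζ hζ) (by rw [diagonal_transpose, hpdiag ζ hζ])

lemma linSubst_diagonal_duursmaForm {ζ : K} {b : ℕ} (hζ : ζ ^ b = 1) (a : K) :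
    linSubst (diagonal ![1, ζ]) (duursmaForm a b) = C ζ * duursmaForm a b := by
  simp only [duursmaForm, map_mul, map_sub, map_pow, linSubst_C, linSubst_diagonal_X,
    cons_val_zero, cons_val_one, cons_val_fin_one, C_1, one_mul, mul_pow, ← C_pow, hζ]
  ring

lemma linSubst_macWilliamsMatrix_transpose_X_zero (q s : K) :
    linSubst (macWilliamsMatrix q s)ᵀ (X 0) = C s * (X 0 + X 1) := by
  rw [linSubst_X, Fin.sum_univ_two]
  simp only [macWilliamsMatrix, transpose_apply, of_apply, cons_val', cons_val_zero,
    cons_val_one, cons_val_fin_one]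
  ring

lemma linSubst_macWilliamsMatrix_transpose_X_one (q s : K) :
    linSubst (macWilliamsMatrix q s)ᵀ (X 1) = C s * ((C q - 1) * X 0 - X 1) := by
  rw [linSubst_X, Fin.sum_univ_two]
  simp only [macWilliamsMatrix, transpose_apply, of_apply, cons_val', cons_val_zero,
    cons_val_one, cons_val_fin_one, C_mul, C_sub, C_1, C_neg]
  ring

lemma linSubst_transpose_duursmaForm_typeI (s : K) :
    linSubst (macWilliamsMatrix 2 s)ᵀ (X 0 * duursmaForm 1 2) =
      C (4 * s ^ 4) * (X 0 * duursmaForm 1 2) := by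
  simp only [duursmaForm, map_mul, map_sub, map_pow, map_one, map_ofNat,
    linSubst_macWilliamsMatrix_transpose_X_zero, linSubst_macWilliamsMatrix_transpose_X_one]
  ring

lemma linSubst_transpose_duursmaForm_typeII (s : K) :
    linSubst (macWilliamsMatrix 2 s)ᵀ (X 0 * duursmaForm 1 4) =
      C (8 * s ^ 6) * (X 0 * duursmaForm 1 4) := by
  simp only [duursmaForm, map_mul, map_sub, map_pow, map_one, map_ofNat,
    linSubst_macWilliamsMatrix_transpose_X_zero, linSubst_macWilliamsMatrix_transpose_X_one]
  ring

lemma linSubst_transpose_duursmaForm_typeIII (s : K) :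
    linSubst (macWilliamsMatrix 3 s)ᵀ (duursmaForm 8 3) = C (9 * s ^ 4) * duursmaForm 8 3 := by
  simp only [duursmaForm, map_mul, map_sub, map_pow, map_ofNat,
    linSubst_macWilliamsMatrix_transpose_X_zero, linSubst_macWilliamsMatrix_transpose_X_one]
  ring

lemma linSubst_transpose_duursmaForm_typeIV (s : K) :
    linSubst (macWilliamsMatrix 4 s)ᵀ (duursmaForm 9 2) = C (8 * s ^ 3) * duursmaForm 9 2 := by
  simp only [duursmaForm, map_mul, map_sub, map_pow, map_ofNat,
    linSubst_macWilliamsMatrix_transpose_X_zero, linSubst_macWilliamsMatrix_transpose_X_one]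
  ring

lemma emultiplicity_diffOp_duursmaForm [CharZero K] {P : MvPolynomial (Fin 2) K} {b k : ℕ}
    (hb : 0 < b) (hP : emultiplicity (X 1) P = (k + (b + 1) : ℕ)) (a : K) :
    emultiplicity (X 1) (diffOp (duursmaForm a b) P) = k := by
  have hX : ¬ (X 1 : MvPolynomial (Fin 2) K) ∣ pderiv 1 (X 1) := by
    rw [pderiv_X_self]
    exact X_prime.not_dvd_one
  have hPy : emultiplicity (X 1) (pderiv 1 P) = (k + b : ℕ) :=
    emultiplicity_derivation X_prime hX hP
  have hyy : emultiplicity (X 1) ((pderiv 1)^[b] (pderiv 1 P)) = k :=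
    emultiplicity_derivation_iterate X_prime hX hPy
  have hxy : X 1 ^ (k + b) ∣ C a * (pderiv 0)^[b] (pderiv 1 P) :=
    (pow_dvd_derivation_iterate_of_apply_eq_zero (pderiv_X_of_ne one_ne_zero)
      (pow_dvd_of_le_emultiplicity hPy.ge) b).mul_left _
  have hform : diffOp (duursmaForm a b) P =
      C a * (pderiv 0)^[b] (pderiv 1 P) - (pderiv 1)^[b] (pderiv 1 P) := by
    rw [duursmaForm, map_mul, Module.End.mul_apply, diffOp_X, map_sub, map_mul,
      LinearMap.sub_apply, Module.End.mul_apply, diffOp_C, diffOp_X_pow, diffOp_X_pow]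
  have hlt : emultiplicity (X 1) ((pderiv 1)^[b] (pderiv 1 P)) <
      emultiplicity (X 1) (C a * (pderiv 0)^[b] (pderiv 1 P)) := by
    rw [hyy]
    exact (Nat.cast_lt.2 (by lia)).trans_le (le_emultiplicity_of_pow_dvd hxy)
  rw [hform, emultiplicity_sub_of_gt hlt, hyy]

section WeightEnumerator

variable {n d b : ℕ} {f : ℕ → K}

variable (n d f) in
/-- The homogeneous form `x ^ n + ∑ f i x ^ (n - i) y ^ i`, with `i` running from `d` to `n`. -/
noncomputable def weightEnumerator : MvPolynomial (Fin 2) K :=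
  X 0 ^ n + ∑ i ∈ Finset.Icc d n, C (f i) * X 0 ^ (n - i) * X 1 ^ i

lemma map_weightEnumerator {L : Type*} [Field L] (φ : K →+* L) :
    map φ (weightEnumerator n d f) = weightEnumerator n d (φ ∘ f) := by
  simp [weightEnumerator]

lemma linSubst_macWilliamsMatrix_weightEnumerator_eq_iff [Infinite K] {q s : K} :
    linSubst (macWilliamsMatrix q s) (weightEnumerator n d f) = weightEnumerator n d f ↔
      ∀ x y : K, x ^ n + ∑ i ∈ Finset.Icc d n, f i * x ^ (n - i) * y ^ i =
        (s * (x + (q - 1) * y)) ^ n +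
          ∑ i ∈ Finset.Icc d n, f i * (s * (x + (q - 1) * y)) ^ (n - i) * (s * (x - y)) ^ i := by
  have heval (v : Fin 2 → K) : eval v (weightEnumerator n d f) =
      v 0 ^ n + ∑ i ∈ Finset.Icc d n, f i * v 0 ^ (n - i) * v 1 ^ i := by
    simp [weightEnumerator]
  have hmulVec (v : Fin 2 → K) : macWilliamsMatrix q s *ᵥ v =
      ![s * (v 0 + (q - 1) * v 1), s * (v 0 - v 1)] := by
    ext i
    fin_cases i <;> simp [macWilliamsMatrix, mulVec_eq_sum] <;> ring
  constructor
  · intro h x y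
    simpa [eval_linSubst, hmulVec, heval, eq_comm] using congrArg (eval ![x, y]) h
  · intro h
    refine MvPolynomial.funext fun v => ?_
    rw [eval_linSubst, hmulVec, heval, heval]
    exact (h (v 0) (v 1)).symm

lemma isHomogeneous_weightEnumerator : (weightEnumerator n d f).IsHomogeneous n := by
  refine (isHomogeneous_X_pow _ _).add (IsHomogeneous.sum _ _ _ fun i hi => ?_)
  have hdeg : n = n - i + i := (Nat.sub_add_cancel (Finset.mem_Icc.1 hi).2).symm
  conv => arg 2; rw [hdeg]
  exact ((isHomogeneous_X_pow _ _).C_mul _).mul (isHomogeneous_X_pow _ _)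

lemma linSubst_diagonal_weightEnumerator (hdiv : ∀ i ∈ Finset.Icc d n, f i ≠ 0 → b ∣ i) {ζ : K}
    (hζ : ζ ^ b = 1) :
    linSubst (diagonal ![1, ζ]) (weightEnumerator n d f) = weightEnumerator n d f := by
  have hterm : ∀ i ∈ Finset.Icc d n, f i * ζ ^ i = f i := fun i hi => by
    by_cases hfi : f i = 0
    · rw [hfi, zero_mul]
    · obtain ⟨j, rfl⟩ := hdiv i hi hfi
      rw [pow_mul, hζ, one_pow, mul_one]
  rw [weightEnumerator, map_add, map_sum]
  congr 1
  · simp [linSubst_diagonal_X]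
  · refine Finset.sum_congr rfl fun i hi => ?_
    conv_rhs => rw [← hterm i hi]
    simp only [map_mul, map_pow, linSubst_C, linSubst_diagonal_X, cons_val_zero, cons_val_one,
      cons_val_fin_one, C_1, one_mul, mul_pow]
    ring

lemma not_X_one_dvd_C_mul_X_zero_pow {a : K} (ha : a ≠ 0) (e : ℕ) :
    ¬ (X 1 : MvPolynomial (Fin 2) K) ∣ C a * X 0 ^ e := by
  rw [((IsUnit.mk0 a ha).map C).dvd_mul_left]
  intro h
  simpa [X_dvd_X] using X_prime.dvd_of_dvd_pow h

lemma emultiplicity_weightEnumerator_sub (hdn : d ≤ n) (hfd : f d ≠ 0) :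
    emultiplicity (X 1) (weightEnumerator n d f - X 0 ^ n) = d := by
  rw [weightEnumerator, add_sub_cancel_left]
  exact emultiplicity_sum_mul_pow (X_ne_zero 1) hdn (not_X_one_dvd_C_mul_X_zero_pow hfd _)

lemma emultiplicity_pderiv_zero_weightEnumerator_sub [CharZero K] (hdn : d < n) (hfd : f d ≠ 0) :
    emultiplicity (X 1) (pderiv 0 (weightEnumerator n d f - X 0 ^ n)) = d := by
  have hsum : pderiv 0 (weightEnumerator n d f - X 0 ^ n) =
      ∑ i ∈ Finset.Icc d n, C (f i * (n - i : ℕ)) * X 0 ^ (n - i - 1) * X 1 ^ i := by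
    rw [weightEnumerator, add_sub_cancel_left, map_sum]
    refine Finset.sum_congr rfl fun i _ => ?_
    have hy : pderiv 0 (X 1 ^ i : MvPolynomial (Fin 2) K) = 0 := by simp
    rw [Derivation.leibniz, hy, pderiv_C_mul, pderiv_pow, pderiv_X_self, smul_zero, zero_add,
      smul_eq_mul, C_mul, map_natCast]
    ring
  have hcoeff : f d * (n - d : ℕ) ≠ 0 :=
    mul_ne_zero hfd (Nat.cast_ne_zero.2 (Nat.sub_ne_zero_of_lt hdn))
  rw [hsum]
  exact emultiplicity_sum_mul_pow (X_ne_zero 1) hdn.le (not_X_one_dvd_C_mul_X_zero_pow hcoeff _)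

end WeightEnumerator

section Bounds

variable {q s a c z : K} {n d b : ℕ} {f : ℕ → K}

lemma mul_le_of_isHomogeneous_of_pow_dvd {σ R : Type*} [CommRing R] [IsDomain R]
    {L G : MvPolynomial σ R} {m N k : ℕ} (hL : L.IsHomogeneous m) (hG : G.IsHomogeneous N)
    (hG0 : G ≠ 0) (h : L ^ k ∣ G) : m * k ≤ N := by
  have hLk : L ^ k ≠ 0 := ne_zero_of_dvd_ne_zero hG0 h
  rw [← (hL.pow k).totalDegree hLk, ← hG.totalDegree hG0]
  exact totalDegree_le_of_dvd_of_isDomain h hG0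

variable [CharZero K]

theorem mul_tsub_le_of_linSubst_duursmaForm (hb : 0 < b) (hz : IsPrimitiveRoot z b)
    (hdn : d ≤ n) (hfd : f d ≠ 0) (hdiv : ∀ i ∈ Finset.Icc d n, f i ≠ 0 → b ∣ i)
    (hF : linSubst (macWilliamsMatrix q s) (weightEnumerator n d f) = weightEnumerator n d f)
    (hp : linSubst (macWilliamsMatrix q s)ᵀ (duursmaForm a b) = C c * duursmaForm a b) :
    (b + 1) * (d - (b + 1)) ≤ n - (b + 1) := by
  obtain hd | hd := lt_or_ge d (b + 1)
  · simp [Nat.sub_eq_zero_of_le hd.le]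
  set G := diffOp (duursmaForm a b) (weightEnumerator n d f) with hG
  have hinv : IsSelfDualRelInvariant q s b G :=
    isSelfDualRelInvariant_diffOp hF (fun ζ => linSubst_diagonal_weightEnumerator hdiv) hp
      fun ζ hζ => linSubst_diagonal_duursmaForm hζ a
  have hGtail : G = diffOp (duursmaForm a b) (weightEnumerator n d f - X 0 ^ n) := by
    simp [hG, duursmaForm]
  have horder : emultiplicity (X 1) G = (d - (b + 1) : ℕ) := by
    rw [hGtail]
    refine emultiplicity_diffOp_duursmaForm hb ?_ a
    rw [Nat.sub_add_cancel hd, emultiplicity_weightEnumerator_sub hdn hfd]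
  exact mul_le_of_isHomogeneous_of_pow_dvd (isHomogeneous_duursmaForm 1 b)
    (isHomogeneous_diffOp (isHomogeneous_duursmaForm a b) isHomogeneous_weightEnumerator)
    (finiteMultiplicity_of_emultiplicity_eq_natCast horder).ne_zero
    (hinv.duursmaForm_one_pow_dvd hb hz (pow_dvd_of_le_emultiplicity horder.ge))

theorem mul_tsub_le_of_linSubst_X_zero_mul_duursmaForm (hb : 0 < b) (heven : Even b)
    (hz : IsPrimitiveRoot z b) (hdn : d < n) (hfd : f d ≠ 0)
    (hdiv : ∀ i ∈ Finset.Icc d n, f i ≠ 0 → b ∣ i)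
    (hF : linSubst (macWilliamsMatrix 2 s) (weightEnumerator n d f) = weightEnumerator n d f)
    (hp : linSubst (macWilliamsMatrix 2 s)ᵀ (X 0 * duursmaForm a b) =
      C c * (X 0 * duursmaForm a b)) :
    (b + 2) * (d - (b + 1)) ≤ n - (b + 2) := by
  obtain hd | hd := lt_or_ge d (b + 1)
  · simp [Nat.sub_eq_zero_of_le hd.le]
  have hhom (a : K) : (X 0 * duursmaForm a b).IsHomogeneous (b + 2) := by
    rw [mul_comm]
    exact (isHomogeneous_duursmaForm a b).mul (isHomogeneous_X _ _)
  set G := diffOp (X 0 * duursmaForm a b) (weightEnumerator n d f) with hG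
  have hinv : IsSelfDualRelInvariant 2 s b G :=
    isSelfDualRelInvariant_diffOp hF (fun ζ => linSubst_diagonal_weightEnumerator hdiv) hp
      fun ζ hζ => by
        rw [map_mul, linSubst_diagonal_duursmaForm hζ, linSubst_diagonal_X]
        simp [mul_left_comm]
  have hGtail : G = diffOp (duursmaForm a b) (pderiv 0 (weightEnumerator n d f - X 0 ^ n)) := by
    rw [hG, mul_comm, map_mul, Module.End.mul_apply, diffOp_X]
    simp [duursmaForm]
  have horder : emultiplicity (X 1) G = (d - (b + 1) : ℕ) := by
    rw [hGtail]
    refine emultiplicity_diffOp_duursmaForm hb ?_ a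
    rw [Nat.sub_add_cancel hd, emultiplicity_pderiv_zero_weightEnumerator_sub hdn hfd]
  exact mul_le_of_isHomogeneous_of_pow_dvd (hhom 1)
    (isHomogeneous_diffOp (hhom a) isHomogeneous_weightEnumerator)
    (finiteMultiplicity_of_emultiplicity_eq_natCast horder).ne_zero
    (hinv.X_zero_mul_duursmaForm_one_pow_dvd hb heven hz (pow_dvd_of_le_emultiplicity horder.ge))

-- For `d = n` the form `∂F/∂x = n x ^ (n - 1)` carries no information on `d`; here evaluating the
-- invariance at `(1, 0)`, `(1, 1)` and `(1, -1)` gives `f n = 1` and `2 ^ n = 4`.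
lemma le_two_of_linSubst_weightEnumerator_self (hn : Even n)
    (hF : linSubst (macWilliamsMatrix 2 s) (weightEnumerator n n f) = weightEnumerator n n f) :
    n ≤ 2 := by
  obtain rfl | hn0 := eq_or_ne n 0
  · simp
  have heval (x y : K) : x ^ n + f n * y ^ n = (s * (x + y)) ^ n + f n * (s * (x - y)) ^ n := by
    have h21 : (2 : K) - 1 = 1 := by norm_num
    simpa [h21] using linSubst_macWilliamsMatrix_weightEnumerator_eq_iff.1 hF x y
  have h10 : s ^ n * (1 + f n) = 1 := by
    simpa [hn0, mul_add, mul_comm, eq_comm] using heval 1 0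
  have h11 : s ^ n * 2 ^ n = 1 + f n := by
    simpa [hn0, mul_pow, one_add_one_eq_two, eq_comm] using heval 1 1
  have h1n : f n * (s ^ n * 2 ^ n) = 1 + f n := by
    simpa [hn0, mul_pow, one_add_one_eq_two, hn.neg_one_pow, eq_comm] using heval 1 (-1)
  have hf : f n = 1 := by
    have hne : 1 + f n ≠ 0 := right_ne_zero_of_mul_eq_one h10
    rw [h11] at h1n
    exact mul_right_cancel₀ hne (h1n.trans (one_mul _).symm)
  have hpow : (2 : K) ^ n = 2 ^ 2 := by
    rw [hf] at h10 h11
    linear_combination (2 ^ n) * (-h10) + 2 * h11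
  exact (Nat.pow_right_injective le_rfl (by exact_mod_cast hpow)).le

lemma minDistance_le_of_typeI (hz : IsPrimitiveRoot z 2) (hdn : d ≤ n) (hfd : f d ≠ 0)
    (hdiv : ∀ i ∈ Finset.Icc d n, f i ≠ 0 → 2 ∣ i)
    (hF : linSubst (macWilliamsMatrix 2 s) (weightEnumerator n d f) = weightEnumerator n d f) :
    d ≤ 2 * (n / 8) + 2 := by
  have hd : 2 ∣ d := hdiv d (Finset.left_mem_Icc.2 hdn) hfd
  obtain rfl | hlt := hdn.eq_or_lt
  · have hd2 := le_two_of_linSubst_weightEnumerator_self (even_iff_two_dvd.2 hd) hF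
    lia
  · have hbound := mul_tsub_le_of_linSubst_X_zero_mul_duursmaForm two_pos even_two hz hlt hfd hdiv
      hF (linSubst_transpose_duursmaForm_typeI s)
    lia

lemma minDistance_le_of_typeII (hz : IsPrimitiveRoot z 4) (hdn : d ≤ n) (hfd : f d ≠ 0)
    (hdiv : ∀ i ∈ Finset.Icc d n, f i ≠ 0 → 4 ∣ i)
    (hF : linSubst (macWilliamsMatrix 2 s) (weightEnumerator n d f) = weightEnumerator n d f) :
    d ≤ 4 * (n / 24) + 4 := by
  have hd : 4 ∣ d := hdiv d (Finset.left_mem_Icc.2 hdn) hfd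
  obtain rfl | hlt := hdn.eq_or_lt
  · have hd2 := le_two_of_linSubst_weightEnumerator_self (even_iff_two_dvd.2 (by lia)) hF
    lia
  · have hbound := mul_tsub_le_of_linSubst_X_zero_mul_duursmaForm four_pos (by decide) hz hlt hfd
      hdiv hF (linSubst_transpose_duursmaForm_typeII s)
    lia

lemma minDistance_le_of_typeIII (hz : IsPrimitiveRoot z 3) (hdn : d ≤ n) (hfd : f d ≠ 0)
    (hdiv : ∀ i ∈ Finset.Icc d n, f i ≠ 0 → 3 ∣ i)
    (hF : linSubst (macWilliamsMatrix 3 s) (weightEnumerator n d f) = weightEnumerator n d f) :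
    d ≤ 3 * (n / 12) + 3 := by
  have hd : 3 ∣ d := hdiv d (Finset.left_mem_Icc.2 hdn) hfd
  have hbound := mul_tsub_le_of_linSubst_duursmaForm three_pos hz hdn hfd hdiv hF
    (linSubst_transpose_duursmaForm_typeIII s)
  lia

lemma minDistance_le_of_typeIV (hz : IsPrimitiveRoot z 2) (hdn : d ≤ n) (hfd : f d ≠ 0)
    (hdiv : ∀ i ∈ Finset.Icc d n, f i ≠ 0 → 2 ∣ i)
    (hF : linSubst (macWilliamsMatrix 4 s) (weightEnumerator n d f) = weightEnumerator n d f) :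
    d ≤ 2 * (n / 6) + 2 := by
  have hd : 2 ∣ d := hdiv d (Finset.left_mem_Icc.2 hdn) hfd
  have hbound := mul_tsub_le_of_linSubst_duursmaForm two_pos hz hdn hfd hdiv hF
    (linSubst_transpose_duursmaForm_typeIV s)
  lia

end Bounds

end Binary
end BinaryForm

open BinaryForm MvPolynomial in
theorem stmt_19_general {K : Type*} [Field K] [CharZero K] (q b n d : ℕ) (f : ℕ → K) (s : K)
    (hdn : d ≤ n) (hfd : f d ≠ 0)
    (hsd : ∀ x y : K,
      x ^ n + ∑ i ∈ Finset.Icc d n, f i * x ^ (n - i) * y ^ i =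
        (s * (x + ((q : K) - 1) * y)) ^ n +
          ∑ i ∈ Finset.Icc d n,
            f i * (s * (x + ((q : K) - 1) * y)) ^ (n - i) * (s * (x - y)) ^ i)
    (hdiv : ∀ i ∈ Finset.Icc d n, f i ≠ 0 → b ∣ i) :
    (q = 2 ∧ b = 2 → d ≤ 2 * (n / 8) + 2) ∧
    (q = 2 ∧ b = 4 → d ≤ 4 * (n / 24) + 4) ∧
    (q = 3 ∧ b = 3 → d ≤ 3 * (n / 12) + 3) ∧
    (q = 4 ∧ b = 2 → d ≤ 2 * (n / 6) + 2) := by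
  let φ := algebraMap K (AlgebraicClosure K)
  have hF : linSubst (macWilliamsMatrix (q : AlgebraicClosure K) (φ s))
      (weightEnumerator n d (φ ∘ f)) = weightEnumerator n d (φ ∘ f) := by
    have hM : macWilliamsMatrix (q : AlgebraicClosure K) (φ s) =
        (macWilliamsMatrix (q : K) s).map φ := by
      ext i j
      fin_cases i <;> fin_cases j <;> simp [macWilliamsMatrix]
    rw [← map_weightEnumerator, hM, ← map_linSubst,
      linSubst_macWilliamsMatrix_weightEnumerator_eq_iff.2 hsd]
  have hfd' : (φ ∘ f) d ≠ 0 := (map_ne_zero φ).2 hfd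
  have hdiv' : ∀ i ∈ Finset.Icc d n, (φ ∘ f) i ≠ 0 → b ∣ i :=
    fun i hi h => hdiv i hi ((map_ne_zero φ).1 h)
  have hroot (m : ℕ) [NeZero m] : ∃ z : AlgebraicClosure K, IsPrimitiveRoot z m :=
    HasEnoughRootsOfUnity.exists_primitiveRoot _ m
  refine ⟨?_, ?_, ?_, ?_⟩
  all_goals
    rintro ⟨rfl, rfl⟩
  · exact minDistance_le_of_typeI (hroot 2).choose_spec hdn hfd' hdiv' (mod_cast hF)
  · exact minDistance_le_of_typeII (hroot 4).choose_spec hdn hfd' hdiv' (mod_cast hF)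
  · exact minDistance_le_of_typeIII (hroot 3).choose_spec hdn hfd' hdiv' (mod_cast hF)
  · exact minDistance_le_of_typeIV (hroot 2).choose_spec hdn hfd' hdiv' (mod_cast hF)

/-- Mallows–Sloane–Duursma bound.  Let `F(x,y) = xⁿ + ∑_{i=d}^{n} fᵢ x^{n-i} yⁱ` (with
`f_d ≠ 0`) be a `b`-divisible virtually self-dual weight enumerator over `𝔽_q`, i.e. `F` is
invariant under the MacWilliams transform
`(x, y) ↦ ((x + (q-1)y)/√q, (x - y)/√q)`.  Then the bounds on the minimum distance `d`
for Types I–IV hold. -/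
theorem stmt_19 (q b n d : ℕ) (f : ℕ → ℝ) (hd : 1 ≤ d) (hdn : d ≤ n) (hfd : f d ≠ 0)
    (hsd : ∀ x y : ℝ,
      x ^ n + ∑ i ∈ Finset.Icc d n, f i * x ^ (n - i) * y ^ i =
        ((x + ((q : ℝ) - 1) * y) / Real.sqrt q) ^ n +
          ∑ i ∈ Finset.Icc d n,
            f i * ((x + ((q : ℝ) - 1) * y) / Real.sqrt q) ^ (n - i) *
              ((x - y) / Real.sqrt q) ^ i)
    (hdiv : ∀ i ∈ Finset.Icc d n, f i ≠ 0 → b ∣ i) :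
    (q = 2 ∧ b = 2 ∧ 2 ∣ n → d ≤ 2 * (n / 8) + 2) ∧
    (q = 2 ∧ b = 4 ∧ 8 ∣ n → d ≤ 4 * (n / 24) + 4) ∧
    (q = 3 ∧ b = 3 ∧ 4 ∣ n → d ≤ 3 * (n / 12) + 3) ∧
    (q = 4 ∧ b = 2 ∧ 2 ∣ n → d ≤ 2 * (n / 6) + 2) := by
  obtain ⟨hI, hII, hIII, hIV⟩ := stmt_19_general q b n d f (√q)⁻¹ hdn hfd
    (by simpa only [div_eq_inv_mul] using hsd) hdiv
  exact ⟨fun h => hI ⟨h.1, h.2.1⟩, fun h => hII ⟨h.1, h.2.1⟩, fun h => hIII ⟨h.1, h.2.1⟩,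
    fun h => hIV ⟨h.1, h.2.1⟩⟩
end
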